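/- arXiv:2305.13065 — 15 statements merged into one kernel-verified Lean document; each statement's English description precedes it below -/
import Mathlib

section
/- For every ℓ ∈ {0,…,M}, the ℓ-th row sum of the ADER matrix B equals the value of the ℓ-th Lagrange basis polynomial at 0, i.e. Σ_{m=0}^{M} B_{ℓm} = ψ̂ˡ(0). Consequently, if B is invertible and r ∈ ℝ^{M+1} is the vector with entries r_ℓ = ψ̂ˡ(0)·u_n for a fixed real number u_n, then B⁻¹ r is the constant vector (u_n,…,u_n)ᵀ. -/
/-- For every ℓ, the ℓ-th row sum of the ADER matrix B equals ψ̂ˡ(0); consequently,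
if B is invertible and r has entries ψ̂ˡ(0)·u_n, then B⁻¹ r is the constant vector uₙ. -/
theorem ader_row_sum_and_inverse
    (M : ℕ) (hM : 1 ≤ M)
    (ξ : Fin (M + 1) → ℝ)
    (hξ01 : ∀ m, ξ m ∈ Set.Icc (0 : ℝ) 1)
    (hξmono : StrictMono ξ)
    (ψ : Fin (M + 1) → Polynomial ℝ)
    (hψdeg : ∀ l, (ψ l).natDegree ≤ M)
    (hψeval : ∀ l m, (ψ l).eval (ξ m) = if l = m then 1 else 0)
    (Bmat Lam : Matrix (Fin (M + 1)) (Fin (M + 1)) ℝ)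
    (hB : ∀ l m, Bmat l m = (ψ l).eval 1 * (ψ m).eval 1 -
        ∫ x in (0 : ℝ)..1, (ψ l).derivative.eval x * (ψ m).eval x)
    (hLam : ∀ l m, Lam l m = ∫ x in (0 : ℝ)..1, (ψ l).eval x * (ψ m).eval x)
    (w : Fin (M + 1) → ℝ)
    (hw : ∀ m, w m = ∫ x in (0 : ℝ)..1, (ψ m).eval x) :
    (∀ l, ∑ m, Bmat l m = (ψ l).eval 0) ∧
    (IsUnit Bmat.det → ∀ un : ℝ,
      Bmat⁻¹.mulVec (fun l => (ψ l).eval 0 * un) = fun _ => un) := by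
  have hsum : ∑ m, ψ m = (1 : Polynomial ℝ) := by
    have hdeg : ∀ p : Polynomial ℝ, p.natDegree ≤ M →
        p.degree < ((Finset.univ : Finset (Fin (M + 1))).card : WithBot ℕ) := by
      intro p hp
      rw [Finset.card_univ, Fintype.card_fin]
      exact lt_of_le_of_lt (Polynomial.degree_le_of_natDegree_le hp)
        (by exact_mod_cast Nat.lt_succ_self M)
    refine Polynomial.eq_of_degrees_lt_of_eval_index_eq (Finset.univ) (v := ξ)
      (hξmono.injective.injOn) (hdeg _ ?_) (hdeg _ (by simp)) ?_
    · exact Polynomial.natDegree_sum_le_of_forall_le _ _ (fun l _ => hψdeg l)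
    · intro i _
      simp [Polynomial.eval_finset_sum, hψeval]
  have hev : ∀ x : ℝ, ∑ m, (ψ m).eval x = 1 := by
    intro x
    rw [← Polynomial.eval_finset_sum, hsum, Polynomial.eval_one]
  have hrow : ∀ l, ∑ m, Bmat l m = (ψ l).eval 0 := by
    intro l
    simp only [hB]
    rw [Finset.sum_sub_distrib, ← Finset.mul_sum, hev,
      ← intervalIntegral.integral_finset_sum]
    · simp only [← Finset.mul_sum, hev, mul_one]
      rw [intervalIntegral.integral_eq_sub_of_hasDerivAt
        (fun x _ => (ψ l).hasDerivAt x)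
        ((ψ l).derivative.continuous.intervalIntegrable _ _)]
      ring
    · intro m _
      exact ((ψ l).derivative.continuous.mul (ψ m).continuous).intervalIntegrable _ _
  refine ⟨hrow, fun hu un => ?_⟩
  have h : (fun l => (ψ l).eval 0 * un) = Bmat.mulVec (fun _ => un) := by
    funext l
    rw [← hrow l, Finset.sum_mul]
    rfl
  rw [h, Matrix.mulVec_mulVec, Matrix.nonsing_inv_mul _ hu, Matrix.one_mulVec]
end

section
/- Assume B is invertible, let G : ℝ × ℝ^Q → ℝ^Q satisfy ‖G(t,u) − G(t,v)‖_∞ ≤ C‖u − v‖_∞ for all t ∈ ℝ and u,v ∈ ℝ^Q (with C ≥ 0), fix t_n ∈ ℝ, u_n ∈ ℝ^Q, and Δt > 0, and set tᵐ = t_n + Δt·ξᵐ. Define J : (ℝ^Q)^{M+1} → (ℝ^Q)^{M+1} by J(u)_ℓ = u_n + Δt Σ_{m=0}^{M} (B⁻¹Λ)_{ℓm} G(tᵐ, uᵐ), and equip (ℝ^Q)^{M+1} with the norm ‖u‖_∞ = max_{0≤m≤M} ‖uᵐ‖_∞. If Δt·‖B⁻¹Λ‖_∞·C < 1, where ‖A‖_∞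 = max_ℓ Σ_m |A_{ℓm}| is the maximum absolute row sum, then J has a unique fixed point u*, and for every initial vector u⁽⁰⁾ the iterates u⁽ᵖ⁾ = J(u⁽ᵖ⁻¹⁾) converge to u* as p → ∞. -/
/-- Convergence of the ADER fixed-point iteration: if Δt·‖B⁻¹Λ‖_∞·C < 1, the map J has a
unique fixed point, and the iterates converge to it from any starting point. -/
theorem ader_iteration_converges
    (M : ℕ) (hM : 1 ≤ M)
    (ξ : Fin (M + 1) → ℝ)
    (hξ01 : ∀ m, ξ m ∈ Set.Icc (0 : ℝ) 1)
    (hξmono : StrictMono ξ)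
    (ψ : Fin (M + 1) → Polynomial ℝ)
    (hψdeg : ∀ l, (ψ l).natDegree ≤ M)
    (hψeval : ∀ l m, (ψ l).eval (ξ m) = if l = m then 1 else 0)
    (Bmat Lam : Matrix (Fin (M + 1)) (Fin (M + 1)) ℝ)
    (hB : ∀ l m, Bmat l m = (ψ l).eval 1 * (ψ m).eval 1 -
        ∫ x in (0 : ℝ)..1, (ψ l).derivative.eval x * (ψ m).eval x)
    (hLam : ∀ l m, Lam l m = ∫ x in (0 : ℝ)..1, (ψ l).eval x * (ψ m).eval x)
    (w : Fin (M + 1) → ℝ)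
    (hw : ∀ m, w m = ∫ x in (0 : ℝ)..1, (ψ m).eval x)
    (hBinv : IsUnit Bmat.det)
    (Q : ℕ) (G : ℝ → (Fin Q → ℝ) → (Fin Q → ℝ)) (C : ℝ) (hC : 0 ≤ C)
    (hG : ∀ (t : ℝ) (u v : Fin Q → ℝ), ‖G t u - G t v‖ ≤ C * ‖u - v‖)
    (tn : ℝ) (un : Fin Q → ℝ) (Δt : ℝ) (hΔt : 0 < Δt)
    (J : (Fin (M + 1) → Fin Q → ℝ) → (Fin (M + 1) → Fin Q → ℝ))
    (hJ : ∀ u l, J u l = un + Δt • ∑ m, ((Bmat⁻¹ * Lam) l m) • G (tn + Δt * ξ m) (u m))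
    (hcontr : Δt * (⨆ l, ∑ m, |(Bmat⁻¹ * Lam) l m|) * C < 1) :
    ∃ ustar : Fin (M + 1) → Fin Q → ℝ,
      J ustar = ustar ∧ (∀ u, J u = u → u = ustar) ∧
      ∀ u0, Filter.Tendsto (fun p => J^[p] u0) Filter.atTop (nhds ustar) := by
  generalize Bmat⁻¹ * Lam = A at hJ hcontr
  set S : ℝ := ⨆ l, ∑ m, |A l m| with hS
  have hrow : ∀ l, ∑ m, |A l m| ≤ S := fun l =>
    le_ciSup (f := fun l => ∑ m, |A l m|) (Set.finite_range _).bddAbove l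
  have hS0 : 0 ≤ S := le_trans (Finset.sum_nonneg fun m _ => abs_nonneg _) (hrow 0)
  have hK0 : 0 ≤ Δt * S * C := by positivity
  have hlip : ∀ u v, ‖J u - J v‖ ≤ Δt * S * C * ‖u - v‖ := by
    intro u v
    refine (pi_norm_le_iff_of_nonneg (by positivity)).2 fun l => ?_
    have e : (J u - J v) l = Δt • ∑ m, A l m •
        (G (tn + Δt * ξ m) (u m) - G (tn + Δt * ξ m) (v m)) := by
      rw [Pi.sub_apply, hJ, hJ, add_sub_add_left_eq_sub, ← smul_sub, ← Finset.sum_sub_distrib]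
      simp only [smul_sub]
    have hb : ‖∑ m, A l m • (G (tn + Δt * ξ m) (u m) - G (tn + Δt * ξ m) (v m))‖
        ≤ ∑ m, |A l m| * (C * ‖u - v‖) := by
      refine norm_sum_le_of_le _ fun m _ => ?_
      rw [norm_smul, Real.norm_eq_abs]
      refine mul_le_mul_of_nonneg_left ((hG _ _ _).trans ?_) (abs_nonneg _)
      exact mul_le_mul_of_nonneg_left (norm_le_pi_norm (u - v) m) hC
    rw [← Finset.sum_mul] at hb
    rw [e, norm_smul, Real.norm_of_nonneg hΔt.le]
    calc _ ≤ Δt * (S * (C * ‖u - v‖)) := by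
          refine mul_le_mul_of_nonneg_left (hb.trans ?_) hΔt.le
          exact mul_le_mul_of_nonneg_right (hrow l) (by positivity)
      _ = _ := by ring
  have hc : ContractingWith (Δt * S * C).toNNReal J := by
    refine ⟨by simpa using hcontr, LipschitzWith.of_dist_le_mul fun u v => ?_⟩
    rw [Real.coe_toNNReal _ hK0, dist_eq_norm, dist_eq_norm]
    exact hlip u v
  exact ⟨hc.fixedPoint, hc.fixedPoint_isFixedPt, fun u hu => hc.fixedPoint_unique hu,
    fun u0 => hc.tendsto_iterate_fixedPoint u0⟩
end

section
/- For every integer M ≥ 0 and every family φ̂⁰,…,φ̂ᴹ of polynomials forming a basis of the real vector space of polynomials of degree at most M, the (M+1)×(M+1) matrix B with entries B_{ℓm} = φ̂ˡ(1)φ̂ᵐ(1) − ∫₀¹ (φ̂ˡ)′(ξ) φ̂ᵐ(ξ) dξ is invertible. -/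
open Polynomial in
noncomputable def aderJ : ℝ[X] →ₗ[ℝ] ℝ where
  toFun r := ∫ x in (0 : ℝ)..1, r.eval x
  map_add' a b := by
    simp only [eval_add]
    exact intervalIntegral.integral_add (a.continuous.intervalIntegrable _ _)
      (b.continuous.intervalIntegrable _ _)
  map_smul' c a := by
    simp only [eval_smul, smul_eq_mul, RingHom.id_apply]
    exact intervalIntegral.integral_const_mul _ _

open Polynomial in
theorem aderJ_derivative (r : ℝ[X]) : aderJ (derivative r) = r.eval 1 - r.eval 0 := by
  change ∫ x in (0 : ℝ)..1, r.derivative.eval x = _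
  exact intervalIntegral.integral_eq_sub_of_hasDerivAt (fun x _ => r.hasDerivAt x)
    (r.derivative.continuous.intervalIntegrable _ _)

open Polynomial in
theorem aderJ_sq (r : ℝ[X]) (h : aderJ (r * r) = 0) : r = 0 := by
  by_contra hr
  have hz : ∀ c ∈ Set.Icc (0 : ℝ) 1, r.eval c = 0 := by
    intro c hc
    by_contra hne
    have : 0 < ∫ x in (0 : ℝ)..1, (r * r).eval x := by
      refine intervalIntegral.integral_pos one_pos (r * r).continuous.continuousOn ?_ ⟨c, hc, ?_⟩
      · intro x _
        rw [eval_mul]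
        exact mul_self_nonneg _
      · rw [eval_mul]
        exact mul_self_pos.2 hne
    exact this.ne' h
  exact hr (eq_zero_of_infinite_isRoot r ((Set.Icc_infinite (one_pos (α := ℝ))).mono hz))

open Polynomial in
theorem ader_kernel (M : ℕ) (p : ℝ[X]) (hp : p.degree < (M + 1 : ℕ))
    (h : ∀ q ∈ degreeLT ℝ (M + 1), p.eval 1 * q.eval 1 - aderJ (derivative p * q) = 0) :
    p = 0 := by
  have h1 := h p (mem_degreeLT.2 hp)
  have h2 := h (derivative p) (mem_degreeLT.2 (lt_of_le_of_lt (degree_derivative_le) hp))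
  have h3 := aderJ_derivative (p * p)
  rw [derivative_mul, mul_comm p, map_add, eval_mul, eval_mul] at h3
  have e1 : p.eval 1 = 0 := by nlinarith [mul_self_nonneg (p.eval 0), mul_self_nonneg (p.eval 1)]
  rw [e1] at h2
  have h4 := aderJ_sq (derivative p) (by linarith)
  have h5 := eq_C_of_derivative_eq_zero h4
  rw [h5, eval_C] at e1
  rw [h5, e1, C_0]

/-- Invertibility of the ADER matrix B for an arbitrary polynomial basis of degree ≤ M. -/
theorem ader_matrix_invertible
    (M : ℕ) (φ : Fin (M + 1) → Polynomial ℝ)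
    (hφdeg : ∀ m, (φ m).natDegree ≤ M)
    (hφli : LinearIndependent ℝ φ)
    (Bφ : Matrix (Fin (M + 1)) (Fin (M + 1)) ℝ)
    (hBφ : ∀ l m, Bφ l m = (φ l).eval 1 * (φ m).eval 1 -
        ∫ x in (0 : ℝ)..1, (φ l).derivative.eval x * (φ m).eval x) :
    IsUnit Bφ.det := by
  have hB : ∀ l m, Bφ l m = (φ l).eval 1 * (φ m).eval 1
      - aderJ ((φ l).derivative * φ m) := by
    intro l m
    rw [hBφ]
    simp [aderJ]
  have hmem : ∀ m, φ m ∈ Polynomial.degreeLT ℝ (M + 1) := by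
    intro m
    rw [Polynomial.mem_degreeLT]
    exact lt_of_le_of_lt Polynomial.degree_le_natDegree
      (by exact_mod_cast Nat.lt_succ_of_le (hφdeg m))
  have hspan : Submodule.span ℝ (Set.range φ) = Polynomial.degreeLT ℝ (M + 1) := by
    haveI : FiniteDimensional ℝ (Polynomial.degreeLT ℝ (M + 1)) :=
      (Polynomial.degreeLTEquiv ℝ (M + 1)).symm.finiteDimensional
    apply Submodule.eq_of_le_of_finrank_eq
    · rw [Submodule.span_le]
      rintro _ ⟨m, rfl⟩
      exact hmem m
    · rw [finrank_span_eq_card hφli, (Polynomial.degreeLTEquiv ℝ (M + 1)).finrank_eq]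
      simp
  rw [isUnit_iff_ne_zero]
  intro hdet
  obtain ⟨v, hv, hvB⟩ := Matrix.exists_vecMul_eq_zero_iff.2 hdet
  apply hv
  have hp : ∑ l, v l • φ l = 0 := by
    apply ader_kernel M
    · exact Polynomial.mem_degreeLT.1
        (Submodule.sum_mem _ fun l _ => Submodule.smul_mem _ _ (hmem l))
    · intro q hq
      rw [← hspan] at hq
      induction hq using Submodule.span_induction with
      | mem x hx =>
        obtain ⟨m, rfl⟩ := hx
        have := congrFun hvB m
        simp only [Matrix.vecMul, dotProduct, hB, Pi.zero_apply] at this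
        rw [← this]
        simp only [Polynomial.eval_finset_sum, Polynomial.derivative_sum, Finset.sum_mul,
          map_sum, Polynomial.eval_smul, Polynomial.derivative_smul, smul_mul_assoc, map_smul,
          smul_eq_mul, ← Finset.sum_sub_distrib]
        exact Finset.sum_congr rfl fun l _ => by ring
      | zero => simp
      | add x y _ _ hx hy =>
        rw [mul_add, map_add, Polynomial.eval_add]
        linarith
      | smul a x _ hx =>
        rw [mul_smul_comm, map_smul, Polynomial.eval_smul, smul_eq_mul, smul_eq_mul]
        linear_combination a * hx
  funext l
  exact Fintype.linearIndependent_iff.1 hφli v hp l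
end

section
/- Let u_n ∈ ℝ^Q, Δt ∈ ℝ, and suppose the vectors u⁰,…,uᴹ ∈ ℝ^Q and G⁰,…,Gᴹ ∈ ℝ^Q satisfy, for every ℓ ∈ {0,…,M}, the ADER implicit weak form Σ_{m=0}^{M} B_{ℓm} uᵐ = ψ̂ˡ(0)·u_n + Δt Σ_{m=0}^{M} Λ_{ℓm} Gᵐ. Then the interpolated end value coincides with the Runge–Kutta-type update with weights w: Σ_{m=0}^{M} ψ̂ᵐ(1)·uᵐ = u_n + Δt Σ_{m=0}^{M} w_m Gᵐ. -/
/-- If (u⁰,…,uᴹ) and (G⁰,…,Gᴹ) satisfy the ADER implicit weak form, then the interpolated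
end value coincides with the Runge–Kutta update with weights w. -/
theorem ader_iwf_final_update
    (M : ℕ) (hM : 1 ≤ M)
    (ξ : Fin (M + 1) → ℝ)
    (hξ01 : ∀ m, ξ m ∈ Set.Icc (0 : ℝ) 1)
    (hξmono : StrictMono ξ)
    (ψ : Fin (M + 1) → Polynomial ℝ)
    (hψdeg : ∀ l, (ψ l).natDegree ≤ M)
    (hψeval : ∀ l m, (ψ l).eval (ξ m) = if l = m then 1 else 0)
    (Bmat Lam : Matrix (Fin (M + 1)) (Fin (M + 1)) ℝ)
    (hB : ∀ l m, Bmat l m = (ψ l).eval 1 * (ψ m).eval 1 -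
        ∫ x in (0 : ℝ)..1, (ψ l).derivative.eval x * (ψ m).eval x)
    (hLam : ∀ l m, Lam l m = ∫ x in (0 : ℝ)..1, (ψ l).eval x * (ψ m).eval x)
    (w : Fin (M + 1) → ℝ)
    (hw : ∀ m, w m = ∫ x in (0 : ℝ)..1, (ψ m).eval x)
    (Q : ℕ) (un : Fin Q → ℝ) (Δt : ℝ)
    (u g : Fin (M + 1) → Fin Q → ℝ)
    (hsys : ∀ l, ∑ m, Bmat l m • u m = (ψ l).eval 0 • un + Δt • ∑ m, Lam l m • g m) :
    ∑ m, (ψ m).eval 1 • u m = un + Δt • ∑ m, w m • g m := by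
  have hone : ∑ l, ψ l = 1 := by
    rw [← sub_eq_zero]
    refine Polynomial.eq_zero_of_natDegree_lt_card_of_eval_eq_zero _ hξmono.injective ?_ ?_
    · intro m
      simp [Polynomial.eval_finset_sum, hψeval]
    · rw [Fintype.card_fin, Nat.lt_succ_iff]
      refine (Polynomial.natDegree_sub_le _ _).trans (max_le ?_ (by simp))
      exact Polynomial.natDegree_sum_le_of_forall_le _ _ (fun l _ => hψdeg l)
  have hev : ∀ x : ℝ, ∑ l, (ψ l).eval x = 1 := by
    intro x
    rw [← Polynomial.eval_finset_sum, hone, Polynomial.eval_one]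
  have hder : ∀ x : ℝ, ∑ l, (ψ l).derivative.eval x = 0 := by
    intro x
    rw [← Polynomial.eval_finset_sum, ← Polynomial.derivative_sum, hone]
    simp
  have hint : ∀ p q : Polynomial ℝ, IntervalIntegrable
      (fun x => p.eval x * q.eval x) MeasureTheory.volume (0 : ℝ) 1 := fun p q =>
    (p.continuous.mul q.continuous).intervalIntegrable 0 1
  have hBs : ∀ m, ∑ l, Bmat l m = (ψ m).eval 1 := by
    intro m
    simp only [hB]
    rw [Finset.sum_sub_distrib, ← Finset.sum_mul, hev,
      ← intervalIntegral.integral_finset_sum (fun l _ => hint _ _)]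
    simp only [← Finset.sum_mul, hder]
    simp
  have hLs : ∀ m, ∑ l, Lam l m = w m := by
    intro m
    simp only [hLam, hw]
    rw [← intervalIntegral.integral_finset_sum (fun l _ => hint _ _)]
    simp only [← Finset.sum_mul, hev, one_mul]
  have h := Finset.sum_congr (rfl : (Finset.univ : Finset (Fin (M + 1))) = Finset.univ)
    (fun l _ => hsys l)
  rw [Finset.sum_comm, Finset.sum_add_distrib, ← Finset.sum_smul, hev, ← Finset.smul_sum,
    Finset.sum_comm (f := fun l m => Lam l m • g m)] at h
  simpa only [← Finset.sum_smul, hBs, hLs, one_smul] using h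
end

section
/- The ADER matrices satisfy Λ·𝟙 = B·β, i.e. for every ℓ ∈ {0,…,M}: Σ_{m=0}^{M} Λ_{ℓm} = Σ_{m=0}^{M} B_{ℓm}·ξᵐ (both sides being equal to ∫₀¹ ψ̂ˡ(ξ) dξ). Consequently, if B is invertible, the Runge–Kutta matrix A = B⁻¹Λ satisfies Σ_{j=0}^{M} A_{ij} = ξⁱ for every i, i.e. the row sums of A equal the corresponding abscissae. -/
/-- Λ·𝟙 = B·β, both sides equalling ∫₀¹ ψ̂ˡ; consequently the row sums of A = B⁻¹Λ are
the abscissae ξⁱ. -/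
theorem ader_row_sums_are_abscissae
    (M : ℕ) (hM : 1 ≤ M)
    (ξ : Fin (M + 1) → ℝ)
    (hξ01 : ∀ m, ξ m ∈ Set.Icc (0 : ℝ) 1)
    (hξmono : StrictMono ξ)
    (ψ : Fin (M + 1) → Polynomial ℝ)
    (hψdeg : ∀ l, (ψ l).natDegree ≤ M)
    (hψeval : ∀ l m, (ψ l).eval (ξ m) = if l = m then 1 else 0)
    (Bmat Lam : Matrix (Fin (M + 1)) (Fin (M + 1)) ℝ)
    (hB : ∀ l m, Bmat l m = (ψ l).eval 1 * (ψ m).eval 1 -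
        ∫ x in (0 : ℝ)..1, (ψ l).derivative.eval x * (ψ m).eval x)
    (hLam : ∀ l m, Lam l m = ∫ x in (0 : ℝ)..1, (ψ l).eval x * (ψ m).eval x)
    (w : Fin (M + 1) → ℝ)
    (hw : ∀ m, w m = ∫ x in (0 : ℝ)..1, (ψ m).eval x) :
    (∀ l, ∑ m, Lam l m = ∑ m, Bmat l m * ξ m) ∧
    (∀ l, ∑ m, Lam l m = ∫ x in (0 : ℝ)..1, (ψ l).eval x) ∧
    (IsUnit Bmat.det → ∀ i, ∑ j, (Bmat⁻¹ * Lam) i j = ξ i) := by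
  have key : ∀ p : Polynomial ℝ, p.natDegree ≤ M → ∀ x : ℝ,
      ∑ m, (ψ m).eval x * p.eval (ξ m) = p.eval x := by
    intro p hp x
    have hlt : ∀ q : Polynomial ℝ, q.natDegree ≤ M →
        q.degree < ((Finset.univ : Finset (Fin (M + 1))).card : ℕ) := by
      intro q hq
      refine lt_of_le_of_lt (Polynomial.degree_le_of_natDegree_le hq) ?_
      rw [Finset.card_univ, Fintype.card_fin]
      exact_mod_cast Nat.lt_succ_self M
    have hEq : ∑ m, ψ m * Polynomial.C (p.eval (ξ m)) = p := by
      refine Polynomial.eq_of_degrees_lt_of_eval_index_eq (s := Finset.univ) (v := ξ)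
        hξmono.injective.injOn (hlt _ ?_) (hlt _ hp) ?_
      · refine Polynomial.natDegree_sum_le_of_forall_le _ _ fun m _ => ?_
        exact (Polynomial.natDegree_mul_C_le _ _).trans (hψdeg m)
      · intro i _
        simp [Polynomial.eval_finsetSum, hψeval]
    have := congrArg (Polynomial.eval x) hEq
    simpa [Polynomial.eval_finsetSum] using this
  have h1 : ∀ x : ℝ, ∑ m, (ψ m).eval x = 1 := by
    intro x
    simpa using key 1 (by simp) x
  have hX : ∀ x : ℝ, ∑ m, (ψ m).eval x * ξ m = x := by
    intro x
    simpa using key Polynomial.X (by simpa using hM) x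
  have hInteg : ∀ p : Polynomial ℝ,
      IntervalIntegrable (fun x => p.eval x) MeasureTheory.volume 0 1 := fun p =>
    p.continuous.intervalIntegrable _ _
  have hL : ∀ l, ∑ m, Lam l m = ∫ x in (0 : ℝ)..1, (ψ l).eval x := by
    intro l
    simp only [hLam]
    rw [← intervalIntegral.integral_finsetSum]
    · refine intervalIntegral.integral_congr fun x _ => ?_
      simp only [← Finset.mul_sum, h1, mul_one]
    · intro m _
      simpa using hInteg (ψ l * ψ m)
  have hBs : ∀ l, ∑ m, Bmat l m * ξ m = ∫ x in (0 : ℝ)..1, (ψ l).eval x := by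
    intro l
    have hs : ∑ m, Bmat l m * ξ m = (ψ l).eval 1 -
        ∫ x in (0 : ℝ)..1, (ψ l).derivative.eval x * x := by
      have e2 : ∑ m, (∫ x in (0 : ℝ)..1, (ψ l).derivative.eval x * (ψ m).eval x) * ξ m
          = ∫ x in (0 : ℝ)..1, (ψ l).derivative.eval x * x := by
        simp only [← intervalIntegral.integral_mul_const]
        rw [← intervalIntegral.integral_finsetSum]
        · refine intervalIntegral.integral_congr fun x _ => ?_
          simp only [mul_assoc, ← Finset.mul_sum, hX]
        · intro m _
          simpa using hInteg ((ψ l).derivative * ψ m * Polynomial.C (ξ m))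
      simp only [hB, sub_mul, Finset.sum_sub_distrib, e2, mul_assoc, ← Finset.mul_sum, hX,
        mul_one]
    have hp := intervalIntegral.integral_deriv_mul_eq_sub (a := (0 : ℝ)) (b := 1)
      (u := fun x => (ψ l).eval x) (v := fun x => x)
      (u' := fun x => (ψ l).derivative.eval x) (v' := fun _ => 1)
      (fun x _ => (ψ l).hasDerivAt x) (fun x _ => hasDerivAt_id x)
      (hInteg _) (by simp)
    rw [intervalIntegral.integral_add (by exact ((ψ l).derivative.continuous.mul continuous_id).intervalIntegrable _ _)
      (by simpa using hInteg (ψ l))] at hp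
    simp only [mul_one, mul_zero, sub_zero] at hp
    rw [hs]
    linarith
  refine ⟨fun l => (hL l).trans (hBs l).symm, hL, fun hu i => ?_⟩
  have hv : Lam.mulVec (fun _ => 1) = Bmat.mulVec ξ := by
    ext l
    simp only [Matrix.mulVec, dotProduct, mul_one]
    exact (hL l).trans (hBs l).symm
  have h := congrArg (fun v => (Bmat⁻¹).mulVec v i) hv
  simp only [Matrix.mulVec_mulVec, Matrix.nonsing_inv_mul _ hu, Matrix.one_mulVec] at h
  simpa [Matrix.mulVec, dotProduct] using h
end

section
/- Let x₀,…,x_K ∈ [0,1] and ω₀,…,ω_K ∈ ℝ be a quadrature rule with degree of exactness at least 2M−1, i.e. Σ_{q=0}^{K} ω_q p(x_q) = ∫₀¹ p(ξ) dξ for every polynomial p of degree ≤ 2M−1, and define the quadrature mass matrix Λ^Q by Λ^Q_{ℓm} = Σ_{q=0}^{K} ω_q ψ̂ˡ(x_q) ψ̂ᵐ(x_q). Then the Runge–Kutta simplifying condition C(M) holds for the ADER scheme: for every z with 1 ≤ z ≤ M and every ℓ ∈ {0,…,M}, Σ_{m=0}^{M} Λ^Q_{ℓm} (ξᵐ)^{z−1}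 = (1/z) Σ_{m=0}^{M} B_{ℓm} (ξᵐ)^{z}. -/
/-- Runge–Kutta simplifying condition C(M) for the ADER scheme with a quadrature of
degree of exactness at least 2M−1. -/
theorem ader_simplifying_condition_C
    (M : ℕ) (hM : 1 ≤ M)
    (ξ : Fin (M + 1) → ℝ)
    (hξ01 : ∀ m, ξ m ∈ Set.Icc (0 : ℝ) 1)
    (hξmono : StrictMono ξ)
    (ψ : Fin (M + 1) → Polynomial ℝ)
    (hψdeg : ∀ l, (ψ l).natDegree ≤ M)
    (hψeval : ∀ l m, (ψ l).eval (ξ m) = if l = m then 1 else 0)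
    (Bmat Lam : Matrix (Fin (M + 1)) (Fin (M + 1)) ℝ)
    (hB : ∀ l m, Bmat l m = (ψ l).eval 1 * (ψ m).eval 1 -
        ∫ x in (0 : ℝ)..1, (ψ l).derivative.eval x * (ψ m).eval x)
    (hLam : ∀ l m, Lam l m = ∫ x in (0 : ℝ)..1, (ψ l).eval x * (ψ m).eval x)
    (w : Fin (M + 1) → ℝ)
    (hw : ∀ m, w m = ∫ x in (0 : ℝ)..1, (ψ m).eval x)
    (K : ℕ) (x : Fin (K + 1) → ℝ) (ω : Fin (K + 1) → ℝ)
    (hx01 : ∀ q, x q ∈ Set.Icc (0 : ℝ) 1)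
    (hexact : ∀ p : Polynomial ℝ, p.natDegree ≤ 2 * M - 1 →
      ∑ q, ω q * p.eval (x q) = ∫ t in (0 : ℝ)..1, p.eval t)
    (LamQ : Matrix (Fin (M + 1)) (Fin (M + 1)) ℝ)
    (hLamQ : ∀ l m, LamQ l m = ∑ q, ω q * (ψ l).eval (x q) * (ψ m).eval (x q)) :
    ∀ z : ℕ, 1 ≤ z → z ≤ M → ∀ l,
      ∑ m, LamQ l m * ξ m ^ (z - 1) = (1 / (z : ℝ)) * ∑ m, Bmat l m * ξ m ^ z := by
  intro z hz1 hzM l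
  have interp : ∀ k : ℕ, k ≤ M → ∀ t : ℝ, ∑ m, (ψ m).eval t * ξ m ^ k = t ^ k := by
    intro k hk t
    have h : (∑ m, ψ m * Polynomial.C (ξ m ^ k)) = (Polynomial.X ^ k : Polynomial ℝ) := by
      apply Polynomial.eq_of_degrees_lt_of_eval_index_eq (s := Finset.univ) (v := ξ)
        (hξmono.injective.injOn)
      · refine lt_of_le_of_lt (b := (M : WithBot ℕ)) ?_ ?_
        · refine (Polynomial.natDegree_le_iff_degree_le).1 ?_
          refine Polynomial.natDegree_sum_le_of_forall_le _ _ ?_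
          intro m _
          exact (Polynomial.natDegree_mul_C_le _ _).trans (hψdeg m)
        · rw [Finset.card_univ, Fintype.card_fin]
          exact_mod_cast Nat.lt_succ_self M
      · rw [Polynomial.degree_X_pow, Finset.card_univ, Fintype.card_fin]
        exact_mod_cast Nat.lt_succ_of_le hk
      · intro i _
        simp [Polynomial.eval_finsetSum, hψeval]
    have h2 := congrArg (Polynomial.eval t) h
    simpa [Polynomial.eval_finsetSum] using h2
  have hL : ∑ m, LamQ l m * ξ m ^ (z - 1) = ∫ t in (0 : ℝ)..1, (ψ l).eval t * t ^ (z - 1) := by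
    have h1 := hexact (ψ l * Polynomial.X ^ (z - 1)) (by
      refine Polynomial.natDegree_mul_le.trans ?_
      rw [Polynomial.natDegree_X_pow]
      have := hψdeg l
      omega)
    simp only [Polynomial.eval_mul, Polynomial.eval_pow, Polynomial.eval_X] at h1
    rw [← h1]
    simp only [hLamQ, Finset.sum_mul]
    rw [Finset.sum_comm]
    refine Finset.sum_congr rfl fun q _ => ?_
    rw [← interp (z - 1) (by omega) (x q), Finset.mul_sum, Finset.mul_sum]
    exact Finset.sum_congr rfl fun m _ => by ring
  have hR : ∑ m, Bmat l m * ξ m ^ z =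
      (ψ l).eval 1 - ∫ t in (0 : ℝ)..1, (ψ l).derivative.eval t * t ^ z := by
    have h1 : (∫ t in (0 : ℝ)..1, (ψ l).derivative.eval t * t ^ z) =
        ∑ m, (∫ t in (0 : ℝ)..1, (ψ l).derivative.eval t * (ψ m).eval t) * ξ m ^ z := by
      simp only [← intervalIntegral.integral_mul_const]
      rw [← intervalIntegral.integral_finsetSum]
      · refine intervalIntegral.integral_congr fun t _ => ?_
        rw [← interp z hzM t, Finset.mul_sum]
        exact Finset.sum_congr rfl fun m _ => by ring
      · intro m _
        apply Continuous.intervalIntegrable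
        fun_prop
    have h2 := interp z hzM 1
    rw [one_pow] at h2
    rw [h1]
    simp only [hB, sub_mul, Finset.sum_sub_distrib]
    congr 1
    simp only [mul_assoc]
    rw [← Finset.mul_sum, h2, mul_one]
  have hP := intervalIntegral.integral_deriv_mul_eq_sub (a := (0 : ℝ)) (b := 1)
    (u := fun t => (ψ l).eval t) (v := fun t : ℝ => t ^ z)
    (u' := fun t => (ψ l).derivative.eval t) (v' := fun t : ℝ => (z : ℝ) * t ^ (z - 1))
    (fun t _ => (ψ l).hasDerivAt t) (fun t _ => hasDerivAt_pow z t)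
    (Continuous.intervalIntegrable (by fun_prop) _ _)
    (Continuous.intervalIntegrable (by fun_prop) _ _)
  rw [intervalIntegral.integral_add (Continuous.intervalIntegrable (by fun_prop) _ _)
    (Continuous.intervalIntegrable (by fun_prop) _ _)] at hP
  have hz0 : (z : ℝ) ≠ 0 := by exact_mod_cast (by omega : z ≠ 0)
  have h3 : (∫ t in (0 : ℝ)..1, (ψ l).eval t * ((z : ℝ) * t ^ (z - 1))) =
      z * ∫ t in (0 : ℝ)..1, (ψ l).eval t * t ^ (z - 1) := by
    rw [← intervalIntegral.integral_const_mul]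
    refine intervalIntegral.integral_congr fun t _ => ?_
    ring
  rw [h3, one_pow, zero_pow (by omega)] at hP
  rw [hL, hR]
  field_simp
  linarith
end

section
/- Assume the interpolatory quadrature at the nodes themselves is exact to degree 2M−1, i.e. Σ_{m=0}^{M} w_m p(ξᵐ) = ∫₀¹ p(ξ) dξ for every polynomial p of degree ≤ 2M−1 (as holds for Gauss–Lobatto and Gauss–Legendre nodes), and assume B is invertible. Let A = B⁻¹·diag(w₀,…,w_M), b = (w₀,…,w_M), c = β. Then the Runge–Kutta simplifying condition D(M) holds: for every z with 1 ≤ z ≤ M and every j ∈ {0,…,M}, Σ_{i=0}^{M} w_i (ξⁱ)^{z−1} A_{ij} = (w_j/z)·(1 − (ξʲ)^{z}). Equivalently, for every such z and every ℓ: Σ_{m=0}^{M} B_{mℓ} (1 − (ξᵐ)^{z}) = z·w_ℓ·(ξˡ)^{z−1}. -/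
/-- Runge–Kutta simplifying condition D(M) for the ADER scheme with nodal quadrature
exact to degree 2M−1 (e.g. Gauss–Lobatto or Gauss–Legendre nodes). -/
theorem ader_simplifying_condition_D
    (M : ℕ) (hM : 1 ≤ M)
    (ξ : Fin (M + 1) → ℝ)
    (hξ01 : ∀ m, ξ m ∈ Set.Icc (0 : ℝ) 1)
    (hξmono : StrictMono ξ)
    (ψ : Fin (M + 1) → Polynomial ℝ)
    (hψdeg : ∀ l, (ψ l).natDegree ≤ M)
    (hψeval : ∀ l m, (ψ l).eval (ξ m) = if l = m then 1 else 0)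
    (Bmat Lam : Matrix (Fin (M + 1)) (Fin (M + 1)) ℝ)
    (hB : ∀ l m, Bmat l m = (ψ l).eval 1 * (ψ m).eval 1 -
        ∫ x in (0 : ℝ)..1, (ψ l).derivative.eval x * (ψ m).eval x)
    (hLam : ∀ l m, Lam l m = ∫ x in (0 : ℝ)..1, (ψ l).eval x * (ψ m).eval x)
    (w : Fin (M + 1) → ℝ)
    (hw : ∀ m, w m = ∫ x in (0 : ℝ)..1, (ψ m).eval x)
    (hquad : ∀ p : Polynomial ℝ, p.natDegree ≤ 2 * M - 1 →
      ∑ m, w m * p.eval (ξ m) = ∫ x in (0 : ℝ)..1, p.eval x)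
    (hBinv : IsUnit Bmat.det) :
    (∀ z : ℕ, 1 ≤ z → z ≤ M → ∀ j,
      ∑ i, w i * ξ i ^ (z - 1) * (Bmat⁻¹ * Matrix.diagonal w) i j
        = (w j / (z : ℝ)) * (1 - ξ j ^ z)) ∧
    (∀ z : ℕ, 1 ≤ z → z ≤ M → ∀ l,
      ∑ m, Bmat m l * (1 - ξ m ^ z) = (z : ℝ) * w l * ξ l ^ (z - 1)) := by
  have key : ∀ z : ℕ, 1 ≤ z → z ≤ M → ∀ l,
      ∑ m, Bmat m l * (1 - ξ m ^ z) = (z : ℝ) * w l * ξ l ^ (z - 1) := by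
    intro z hz1 hzM l
    have hq : ∑ m, Polynomial.C (1 - ξ m ^ z) * ψ m = 1 - Polynomial.X ^ z := by
      apply Polynomial.eq_of_natDegree_lt_card_of_eval_eq _ _ hξmono.injective
      · intro i
        simp [Polynomial.eval_finsetSum, hψeval]
      · rw [Fintype.card_fin, max_lt_iff]
        constructor
        · apply Nat.lt_succ_of_le
          apply Polynomial.natDegree_sum_le_of_forall_le
          intro m _
          exact (Polynomial.natDegree_C_mul_le _ _).trans (hψdeg m)
        · apply Nat.lt_succ_of_le
          refine (Polynomial.natDegree_sub_le _ _).trans ?_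
          simp [hzM]
    have hq1 : ∑ m, (1 - ξ m ^ z) * (ψ m).eval 1 = 0 := by
      have := congrArg (Polynomial.eval 1) hq
      simpa [Polynomial.eval_finsetSum] using this
    have hqd : ∀ x : ℝ, ∑ m, (1 - ξ m ^ z) * (ψ m).derivative.eval x
        = - ((z : ℝ) * x ^ (z - 1)) := by
      intro x
      have := congrArg (fun p => Polynomial.eval x (Polynomial.derivative p)) hq
      simp only [Polynomial.derivative_sum, Polynomial.derivative_C_mul,
        Polynomial.eval_finsetSum, Polynomial.eval_C_mul] at this
      rw [this]
      simp [Polynomial.derivative_X_pow]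
    have hint : ∑ m, (1 - ξ m ^ z) *
        (∫ x in (0 : ℝ)..1, (ψ m).derivative.eval x * (ψ l).eval x)
        = - ((z : ℝ) * ∫ x in (0 : ℝ)..1, x ^ (z - 1) * (ψ l).eval x) := by
      simp_rw [← intervalIntegral.integral_const_mul]
      rw [← intervalIntegral.integral_finsetSum, ← intervalIntegral.integral_neg]
      · congr 1
        funext x
        have := congrArg (fun t => t * (ψ l).eval x) (hqd x)
        simp only [Finset.sum_mul] at this
        rw [Finset.sum_congr rfl (fun m _ => (mul_assoc _ _ _).symm), this]
        ring
      · intro m _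
        apply Continuous.intervalIntegrable
        fun_prop
    have hqu := hquad (Polynomial.X ^ (z - 1) * ψ l) (by
      refine Polynomial.natDegree_mul_le.trans ?_
      rw [Polynomial.natDegree_X_pow]
      have := hψdeg l
      omega)
    simp only [Polynomial.eval_mul, Polynomial.eval_pow, Polynomial.eval_X, hψeval,
      mul_ite, mul_one, mul_zero, Finset.sum_ite_eq, Finset.mem_univ, if_true] at hqu
    rw [← hqu] at hint
    have : ∑ m, Bmat m l * (1 - ξ m ^ z) =
        (∑ m, (1 - ξ m ^ z) * (ψ m).eval 1) * (ψ l).eval 1 - ∑ m, (1 - ξ m ^ z) *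
        (∫ x in (0 : ℝ)..1, (ψ m).derivative.eval x * (ψ l).eval x) := by
      rw [Finset.sum_mul, ← Finset.sum_sub_distrib]
      refine Finset.sum_congr rfl fun m _ => ?_
      rw [hB]
      ring
    rw [this, hq1, hint]
    ring
  refine ⟨?_, key⟩
  intro z hz1 hzM j
  have hz : (z : ℝ) ≠ 0 := by
    have : z ≠ 0 := by omega
    exact_mod_cast this
  have hv : Matrix.vecMul (fun m => (1 - ξ m ^ z) / (z : ℝ)) Bmat
      = fun i => w i * ξ i ^ (z - 1) := by
    funext l
    have h := key z hz1 hzM l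
    simp only [Matrix.vecMul, dotProduct]
    have h2 : ∑ m, (1 - ξ m ^ z) / (z : ℝ) * Bmat m l
        = (∑ m, Bmat m l * (1 - ξ m ^ z)) / z := by
      rw [Finset.sum_div]
      refine Finset.sum_congr rfl fun m _ => ?_
      ring
    rw [h2, h]
    field_simp
  have hgoal : ∑ i, w i * ξ i ^ (z - 1) * (Bmat⁻¹ * Matrix.diagonal w) i j
      = Matrix.vecMul (fun i => w i * ξ i ^ (z - 1)) (Bmat⁻¹ * Matrix.diagonal w) j := rfl
  rw [hgoal, ← hv, Matrix.vecMul_vecMul, ← Matrix.mul_assoc,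
    Matrix.mul_nonsing_inv _ hBinv, Matrix.one_mul, Matrix.vecMul_diagonal]
  ring
end

section
/- Assume the interpolatory quadrature at the nodes is exact to degree 2M−1, i.e. Σ_{m=0}^{M} w_m p(ξᵐ) = ∫₀¹ p(ξ) dξ for every polynomial p of degree ≤ 2M−1. Let φ̂⁰,…,φ̂ᴹ be any polynomials forming a basis of the real vector space of polynomials of degree at most M, and define (B_φ)_{ℓm} = φ̂ˡ(1)φ̂ᵐ(1) − ∫₀¹ (φ̂ˡ)′(ξ) φ̂ᵐ(ξ) dξ, (Λ_φ)_{ℓm} = φ̂ˡ(ξᵐ)·w_m, and the change-of-basis matrix H_{ℓm} = φ̂ᵐ(ξˡ). Then for every u_n ∈ ℝ^Q, Δt ∈ ℝ, every g : {0,…,M} → ℝ^Q, and every c ∈ (ℝ^Q)^{M+1}, setting vˡ = Σ_{m} H_{ℓm} cᵐ, the two ADER systems are equivalent: [for all ℓ: Σ_{m} (B_φ)_{ℓm} cᵐ = φ̂ˡ(0)·u_n + Δt Σ_{m} (Λ_φ)_{ℓm} gᵐ] holds if and only if [for all ℓ: Σ_{m} B_{ℓm} vᵐ = ψ̂ˡ(0)·u_n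 + Δt·w_ℓ·gˡ] holds. -/
/-- Equivalence between the ADER system for an arbitrary polynomial basis (with nodal
quadrature of exactness 2M−1) and the ADER system for the nodal Lagrange basis. -/
theorem ader_arbitrary_basis_equiv_nodal
    (M : ℕ) (hM : 1 ≤ M)
    (ξ : Fin (M + 1) → ℝ)
    (hξ01 : ∀ m, ξ m ∈ Set.Icc (0 : ℝ) 1)
    (hξmono : StrictMono ξ)
    (ψ : Fin (M + 1) → Polynomial ℝ)
    (hψdeg : ∀ l, (ψ l).natDegree ≤ M)
    (hψeval : ∀ l m, (ψ l).eval (ξ m) = if l = m then 1 else 0)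
    (Bmat Lam : Matrix (Fin (M + 1)) (Fin (M + 1)) ℝ)
    (hB : ∀ l m, Bmat l m = (ψ l).eval 1 * (ψ m).eval 1 -
        ∫ x in (0 : ℝ)..1, (ψ l).derivative.eval x * (ψ m).eval x)
    (hLam : ∀ l m, Lam l m = ∫ x in (0 : ℝ)..1, (ψ l).eval x * (ψ m).eval x)
    (w : Fin (M + 1) → ℝ)
    (hw : ∀ m, w m = ∫ x in (0 : ℝ)..1, (ψ m).eval x)
    (hquad : ∀ p : Polynomial ℝ, p.natDegree ≤ 2 * M - 1 →
      ∑ m, w m * p.eval (ξ m) = ∫ x in (0 : ℝ)..1, p.eval x)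
    (φ : Fin (M + 1) → Polynomial ℝ)
    (hφdeg : ∀ m, (φ m).natDegree ≤ M)
    (hφli : LinearIndependent ℝ φ)
    (Bphi Lamphi : Matrix (Fin (M + 1)) (Fin (M + 1)) ℝ)
    (hBphi : ∀ l m, Bphi l m = (φ l).eval 1 * (φ m).eval 1 -
        ∫ x in (0 : ℝ)..1, (φ l).derivative.eval x * (φ m).eval x)
    (hLamphi : ∀ l m, Lamphi l m = (φ l).eval (ξ m) * w m)
    (Hmat : Matrix (Fin (M + 1)) (Fin (M + 1)) ℝ)
    (hH : ∀ l m, Hmat l m = (φ m).eval (ξ l))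
    (Q : ℕ) (un : Fin Q → ℝ) (Δt : ℝ)
    (g cvec v : Fin (M + 1) → Fin Q → ℝ)
    (hv : ∀ l, v l = ∑ m, Hmat l m • cvec m) :
    (∀ l, ∑ m, Bphi l m • cvec m = (φ l).eval 0 • un + Δt • ∑ m, Lamphi l m • g m) ↔
    (∀ l, ∑ m, Bmat l m • v m = (ψ l).eval 0 • un + (Δt * w l) • g l) := by
  have hφ : ∀ l, φ l = ∑ k, Polynomial.C (Hmat k l) * ψ k := by
    intro l
    apply Polynomial.eq_of_natDegree_lt_card_of_eval_eq _ _ hξmono.injective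
    · intro i
      simp [Polynomial.eval_finset_sum, hψeval, hH]
    · rw [Fintype.card_fin]
      apply Nat.lt_succ_of_le
      apply max_le (hφdeg l)
      apply Polynomial.natDegree_sum_le_of_forall_le
      intro k _
      exact (Polynomial.natDegree_C_mul_le _ _).trans (hψdeg k)
  have he : ∀ l x, (φ l).eval x = ∑ k, Hmat k l * (ψ k).eval x := by
    intro l x
    rw [hφ l]; simp [Polynomial.eval_finset_sum]
  have hd : ∀ l x, (φ l).derivative.eval x = ∑ k, Hmat k l * (ψ k).derivative.eval x := by
    intro l x
    rw [hφ l]; simp [Polynomial.eval_finset_sum, Polynomial.derivative_sum]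
  have hinj : Function.Injective Hmat.mulVec := by
    rw [← Matrix.coe_mulVecLin, injective_iff_map_eq_zero]
    intro a ha
    have hs : ∑ l, a l • φ l = 0 := by
      have h1 : ∑ l, a l • φ l = ∑ k, Polynomial.C (Hmat.mulVec a k) * ψ k := by
        simp only [Matrix.mulVec, dotProduct, map_sum, map_mul, Finset.sum_mul]
        rw [Finset.sum_comm]
        refine Finset.sum_congr rfl fun l _ => ?_
        rw [hφ l, Finset.smul_sum]
        refine Finset.sum_congr rfl fun k _ => ?_
        rw [Polynomial.smul_eq_C_mul]; ring
      rw [h1]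
      have h2 : Hmat.mulVec a = 0 := ha
      simp [h2]
    funext l
    exact Fintype.linearIndependent_iff.mp hφli a hs l
  have hunit : IsUnit Hmat.transpose := by
    rw [Matrix.isUnit_transpose]
    exact Matrix.mulVec_injective_iff_isUnit.mp hinj
  have hinjT : Function.Injective (Hmat.transpose).mulVec := Matrix.mulVec_injective_iff_isUnit.mpr hunit
  have hBB : ∀ l m, Bphi l m = ∑ k, ∑ j, Hmat k l * Hmat j m * Bmat k j := by
    intro l m
    have hint : ∫ x in (0 : ℝ)..1, (φ l).derivative.eval x * (φ m).eval x =
        ∑ k, ∑ j, Hmat k l * Hmat j m *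
          ∫ x in (0 : ℝ)..1, (ψ k).derivative.eval x * (ψ j).eval x := by
      simp only [hd, he, Finset.sum_mul_sum]
      rw [intervalIntegral.integral_finset_sum]
      · refine Finset.sum_congr rfl fun k _ => ?_
        rw [intervalIntegral.integral_finset_sum]
        · refine Finset.sum_congr rfl fun j _ => ?_
          rw [← intervalIntegral.integral_const_mul]
          congr 1; funext x; ring
        · intro j _
          apply Continuous.intervalIntegrable
          fun_prop
      · intro k _
        apply Continuous.intervalIntegrable
        fun_prop
    rw [hBphi, hint, he, he, Finset.sum_mul_sum, ← Finset.sum_sub_distrib]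
    refine Finset.sum_congr rfl fun k _ => ?_
    rw [← Finset.sum_sub_distrib]
    refine Finset.sum_congr rfl fun j _ => ?_
    rw [hB]; ring
  have hL : ∀ q, (fun l => (∑ m, Bphi l m • cvec m) q) =
      (Hmat.transpose).mulVec (fun k => (∑ m, Bmat k m • v m) q) := by
    intro q
    funext l
    simp only [Matrix.mulVec, dotProduct, Matrix.transpose_apply, Finset.sum_apply,
      Pi.smul_apply, smul_eq_mul, hv, hBB, Finset.mul_sum, Finset.sum_mul]
    rw [Finset.sum_comm]
    refine Finset.sum_congr rfl fun k _ => ?_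
    rw [Finset.sum_comm]
    refine Finset.sum_congr rfl fun j _ => Finset.sum_congr rfl fun m _ => ?_
    ring
  have hR : ∀ q, (fun l => ((φ l).eval 0 • un + Δt • ∑ m, Lamphi l m • g m) q) =
      (Hmat.transpose).mulVec (fun k => ((ψ k).eval 0 • un + (Δt * w k) • g k) q) := by
    intro q
    funext l
    simp only [Matrix.mulVec, dotProduct, Matrix.transpose_apply, Finset.sum_apply,
      Pi.smul_apply, Pi.add_apply, smul_eq_mul, he l 0, hLamphi, ← hH, Finset.mul_sum,
      Finset.sum_mul, ← Finset.sum_add_distrib]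
    refine Finset.sum_congr rfl fun k _ => ?_
    ring
  constructor
  · intro h l
    funext q
    have h1 := hinjT ((hL q).symm.trans ((funext fun l => congrFun (h l) q).trans (hR q)))
    exact congrFun h1 l
  · intro h l
    funext q
    have h1 := (hL q).trans ((congrArg (Hmat.transpose).mulVec
      (funext fun l => congrFun (h l) q)).trans (hR q).symm)
    exact congrFun h1 l
end

section
/- Let X and Y be normed real vector spaces, let L¹, L² : X → Y be (possibly nonlinear) maps, let Δ > 0, α₁ > 0, α₂ ≥ 0, and let u_Δ ∈ X satisfy L²(u_Δ) = 0. Assume the coercivity-like property ‖L¹(v) − L¹(w)‖ ≥ α₁‖v − w‖ for all v,w ∈ X, and the Lipschitz-continuity-like property ‖(L¹(v) − L²(v)) − (L¹(w) − L²(w))‖ ≤ α₂·Δ·‖v − w‖ for all v,w ∈ X. If (u⁽ᵖ⁾)_{p≥0} is a sequence in X satisfying the Deferred Correction iteration L¹(u⁽ᵖ⁾) = L¹(u⁽ᵖ⁻¹⁾) − L²(u⁽ᵖ⁻¹⁾) for all p ≥ 1, then for every p ∈ ℕ one has ‖u⁽ᵖ⁾ − u_Δ‖ ≤ (Δ·α₂/α₁)^p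 · ‖u⁽⁰⁾ − u_Δ‖. -/
/-- The Deferred Correction error estimate: under the coercivity-like property of L¹ and the
Lipschitz-continuity-like property of L¹ − L², the DeC iterates satisfy
‖u⁽ᵖ⁾ − u_Δ‖ ≤ (Δ·α₂/α₁)ᵖ ‖u⁽⁰⁾ − u_Δ‖. -/
theorem deferred_correction_error_estimate
    {X Y : Type*} [NormedAddCommGroup X] [NormedSpace ℝ X]
    [NormedAddCommGroup Y] [NormedSpace ℝ Y]
    (L1 L2 : X → Y) (Δ α₁ α₂ : ℝ)
    (hΔ : 0 < Δ) (hα₁ : 0 < α₁) (hα₂ : 0 ≤ α₂)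
    (uΔ : X) (huΔ : L2 uΔ = 0)
    (hcoerc : ∀ v w : X, α₁ * ‖v - w‖ ≤ ‖L1 v - L1 w‖)
    (hlip : ∀ v w : X, ‖(L1 v - L2 v) - (L1 w - L2 w)‖ ≤ α₂ * Δ * ‖v - w‖)
    (u : ℕ → X)
    (hiter : ∀ p : ℕ, L1 (u (p + 1)) = L1 (u p) - L2 (u p)) :
    ∀ p : ℕ, ‖u p - uΔ‖ ≤ (Δ * α₂ / α₁) ^ p * ‖u 0 - uΔ‖ := by
  intro p
  induction p with
  | zero => simp
  | succ k ih =>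
    have h1 := hcoerc (u (k + 1)) uΔ
    have h2 := hlip (u k) uΔ
    rw [huΔ, sub_zero, ← hiter k] at h2
    have h3 : ‖u (k + 1) - uΔ‖ ≤ (Δ * α₂ / α₁) * ‖u k - uΔ‖ := by
      rw [div_mul_eq_mul_div, le_div_iff₀ hα₁]
      linarith
    have h4 : 0 ≤ Δ * α₂ / α₁ := by positivity
    calc ‖u (k + 1) - uΔ‖ ≤ (Δ * α₂ / α₁) * ‖u k - uΔ‖ := h3
      _ ≤ (Δ * α₂ / α₁) * ((Δ * α₂ / α₁) ^ k * ‖u 0 - uΔ‖) :=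
          mul_le_mul_of_nonneg_left ih h4
      _ = (Δ * α₂ / α₁) ^ (k + 1) * ‖u 0 - uΔ‖ := by rw [pow_succ]; ring
end

section
/- Fix p* ∈ ℕ and constants Δ₀ > 0, a ≥ 0, C ≥ 0, c ≥ 0, c₀ ≥ 0. Then there exists K ≥ 0, depending only on p*, Δ₀, a, C, c, c₀, with the following property. Let 0 < Δ ≤ Δ₀; let (X⁽ᵖ⁾)_{p≥0} and (Y⁽ᵖ⁾)_{p≥1} be families of normed real vector spaces; for each p ≥ 1 let L¹⁽ᵖ⁾, L²⁽ᵖ⁾ : X⁽ᵖ⁾ → Y⁽ᵖ⁾ be maps, α₁⁽ᵖ⁾ > 0 and α₂⁽ᵖ⁾ ≥ 0 constants with α₂⁽ᵖ⁾/α₁⁽ᵖ⁾ ≤ a, and u_Δ⁽ᵖ⁾ ∈ X⁽ᵖ⁾ with L²⁽ᵖ⁾(u_Δ⁽ᵖ⁾) = 0, such that ‖L¹⁽ᵖ⁾(v) − L¹⁽ᵖ⁾(w)‖ ≥ α₁⁽ᵖ⁾‖v − w‖ and ‖(L¹⁽ᵖ⁾(v) − L²⁽ᵖ⁾(v)) −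 (L¹⁽ᵖ⁾(w) − L²⁽ᵖ⁾(w))‖ ≤ α₂⁽ᵖ⁾·Δ·‖v − w‖ for all v,w ∈ X⁽ᵖ⁾. For each p ≥ 0 let E⁽ᵖ⁾ : X⁽ᵖ⁾ → X⁽ᵖ⁺¹⁾ be an embedding map and u_ex⁽ᵖ⁾ ∈ X⁽ᵖ⁾ a projected exact solution, and let (u⁽ᵖ⁾)_{p≥0} with u⁽ᵖ⁾ ∈ X⁽ᵖ⁾ satisfy the modified DeC iteration L¹⁽ᵖ⁾(u⁽ᵖ⁾) = L¹⁽ᵖ⁾(E⁽ᵖ⁻¹⁾(u⁽ᵖ⁻¹⁾)) − L²⁽ᵖ⁾(E⁽ᵖ⁻¹⁾(u⁽ᵖ⁻¹⁾)) for all p ≥ 1. Assume moreover ‖u_Δ⁽ᵖ⁾ − u_ex⁽ᵖ⁾‖ ≤ c·Δ^{p+1} for all 1 ≤ p ≤ p*, ‖E⁽ᵖ⁾(u⁽ᵖ⁾) − u_ex⁽ᵖ⁺¹⁾‖ ≤ C·‖u⁽ᵖ⁾ − u_ex⁽ᵖ⁾‖ for all 0 ≤ p < p*, and ‖u⁽⁰⁾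 − u_ex⁽⁰⁾‖ ≤ c₀·Δ. Then ‖u⁽ᵖ*⁾ − u_ex⁽ᵖ*⁾‖ ≤ K·Δ^{p*+1}. -/
/-- Error estimate for the modified (p-adaptive) Deferred Correction procedure: there is a
constant K, depending only on p*, Δ₀, a, C, c, c₀, bounding the final error by K·Δ^{p*+1}. -/
theorem modified_dec_error_estimate
    (pstar : ℕ) (Δ₀ a C c c₀ : ℝ)
    (hΔ₀ : 0 < Δ₀) (ha : 0 ≤ a) (hC : 0 ≤ C) (hc : 0 ≤ c) (hc₀ : 0 ≤ c₀) :
    ∃ K : ℝ, 0 ≤ K ∧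
      ∀ (Δ : ℝ), 0 < Δ → Δ ≤ Δ₀ →
      ∀ (X : ℕ → Type) (Y : ℕ → Type)
        [∀ p, NormedAddCommGroup (X p)] [∀ p, NormedSpace ℝ (X p)]
        [∀ p, NormedAddCommGroup (Y p)] [∀ p, NormedSpace ℝ (Y p)]
        (L1 L2 : ∀ p, X p → Y p) (α₁ α₂ : ℕ → ℝ) (uΔ : ∀ p, X p),
        (∀ p, 1 ≤ p → 0 < α₁ p) →
        (∀ p, 1 ≤ p → 0 ≤ α₂ p) →
        (∀ p, 1 ≤ p → α₂ p / α₁ p ≤ a) →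
        (∀ p, 1 ≤ p → L2 p (uΔ p) = 0) →
        (∀ p, 1 ≤ p → ∀ v w : X p, α₁ p * ‖v - w‖ ≤ ‖L1 p v - L1 p w‖) →
        (∀ p, 1 ≤ p → ∀ v w : X p,
          ‖(L1 p v - L2 p v) - (L1 p w - L2 p w)‖ ≤ α₂ p * Δ * ‖v - w‖) →
      ∀ (E : ∀ p, X p → X (p + 1)) (uex : ∀ p, X p) (u : ∀ p, X p),
        (∀ p : ℕ, L1 (p + 1) (u (p + 1))
            = L1 (p + 1) (E p (u p)) - L2 (p + 1) (E p (u p))) →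
        (∀ p, 1 ≤ p → p ≤ pstar → ‖uΔ p - uex p‖ ≤ c * Δ ^ (p + 1)) →
        (∀ p, p < pstar → ‖E p (u p) - uex (p + 1)‖ ≤ C * ‖u p - uex p‖) →
        ‖u 0 - uex 0‖ ≤ c₀ * Δ →
        ‖u pstar - uex pstar‖ ≤ K * Δ ^ (pstar + 1) := by
  obtain ⟨k, hk0, hks⟩ : ∃ k : ℕ → ℝ, k 0 = c₀ ∧
      ∀ n, k (n + 1) = a * (C * k n + c * Δ₀) + c :=
    ⟨fun n => Nat.rec c₀ (fun _ x => a * (C * x + c * Δ₀) + c) n, rfl, fun _ => rfl⟩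
  have hk : ∀ n, 0 ≤ k n := by
    intro n
    induction n with
    | zero => rw [hk0]; exact hc₀
    | succ n ih => rw [hks]; positivity
  refine ⟨k pstar, hk pstar, ?_⟩
  intro Δ hΔ hΔle X Y _ _ _ _ L1 L2 α₁ α₂ uΔ h1 h2 h12 hL2 hco hlip E uex u hit hacc hE h0
  have key : ∀ p, p ≤ pstar → ‖u p - uex p‖ ≤ k p * Δ ^ (p + 1) := by
    intro p
    induction p with
    | zero => intro _; rw [hk0]; simpa using h0
    | succ p ih =>
      intro hp
      have ih' := ih (by omega)
      have hp1 : 1 ≤ p + 1 := by omega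
      have hα := h1 (p + 1) hp1
      have hA := hacc (p + 1) hp1 hp
      have hEp := hE p (by omega)
      have hc1 := hco (p + 1) hp1 (u (p + 1)) (uΔ (p + 1))
      have hl1 := hlip (p + 1) hp1 (E p (u p)) (uΔ (p + 1))
      rw [hL2 (p + 1) hp1, sub_zero, ← hit p] at hl1
      have h2a : α₂ (p + 1) ≤ a * α₁ (p + 1) := (div_le_iff₀ hα).1 (h12 (p + 1) hp1)
      have hstep : ‖u (p + 1) - uΔ (p + 1)‖ ≤ a * Δ * ‖E p (u p) - uΔ (p + 1)‖ := by
        refine le_of_mul_le_mul_left ?_ hα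
        calc _ ≤ α₂ (p + 1) * Δ * ‖E p (u p) - uΔ (p + 1)‖ := hc1.trans hl1
          _ ≤ a * α₁ (p + 1) * Δ * ‖E p (u p) - uΔ (p + 1)‖ := by gcongr
          _ = _ := by ring
      have htri : ‖E p (u p) - uΔ (p + 1)‖ ≤ C * (k p * Δ ^ (p + 1)) + c * Δ₀ * Δ ^ (p + 1) := by
        have t := norm_sub_le_norm_sub_add_norm_sub (E p (u p)) (uex (p + 1)) (uΔ (p + 1))
        rw [norm_sub_rev (uex (p + 1))] at t
        have e1 : C * ‖u p - uex p‖ ≤ C * (k p * Δ ^ (p + 1)) := by gcongr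
        have e2 : c * Δ ^ (p + 1 + 1) ≤ c * Δ₀ * Δ ^ (p + 1) := by
          calc _ = c * Δ * Δ ^ (p + 1) := by ring
            _ ≤ _ := by gcongr
        linarith
      have t2 := norm_sub_le_norm_sub_add_norm_sub (u (p + 1)) (uΔ (p + 1)) (uex (p + 1))
      have e3 : a * Δ * ‖E p (u p) - uΔ (p + 1)‖
          ≤ a * Δ * (C * (k p * Δ ^ (p + 1)) + c * Δ₀ * Δ ^ (p + 1)) := by gcongr
      calc _ ≤ a * Δ * (C * (k p * Δ ^ (p + 1)) + c * Δ₀ * Δ ^ (p + 1))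
            + c * Δ ^ (p + 1 + 1) := by linarith
        _ = _ := by rw [hks]; ring
  exact key pstar le_rfl
end

section
/- Let M₀ ≤ M₁ be natural numbers; let τ⁰ < ⋯ < τ^{M₀} be M₀+1 distinct points of [0,1] with associated Lagrange basis polynomials χ⁰,…,χ^{M₀} of degree M₀, and let σ⁰ < ⋯ < σ^{M₁} be M₁+1 distinct points of [0,1] with associated Lagrange basis polynomials ρ⁰,…,ρ^{M₁} of degree M₁. Define the interpolation matrix H by H_{km} = χᵐ(σᵏ). Then for all ℓ ∈ {0,…,M₁} and m ∈ {0,…,M₀}: Σ_{k=0}^{M₁} (∫₀¹ ρˡ(ξ) ρᵏ(ξ) dξ) · H_{km} = ∫₀¹ ρˡ(ξ) χᵐ(ξ) dξ. In matrix form, Λ⁽¹⁾H = Λ^{(1,0)}, where Λ⁽¹⁾ is the mass matrix of the fine Lagrange basis and Λ^{(1,0)} the mixed mass matrix; this identity establishes the equivalence of the ADERdu and ADER-L² iterations. -/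
/-- Equivalence of ADERdu and ADER-L²: the fine mass matrix times the interpolation matrix
equals the mixed mass matrix, Λ⁽¹⁾H = Λ^{(1,0)}. -/
theorem ader_du_L2_equivalence
    (M₀ M₁ : ℕ) (hM : M₀ ≤ M₁)
    (τ : Fin (M₀ + 1) → ℝ) (σ : Fin (M₁ + 1) → ℝ)
    (hτ01 : ∀ m, τ m ∈ Set.Icc (0 : ℝ) 1) (hσ01 : ∀ m, σ m ∈ Set.Icc (0 : ℝ) 1)
    (hτmono : StrictMono τ) (hσmono : StrictMono σ)
    (χ : Fin (M₀ + 1) → Polynomial ℝ)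
    (hχdeg : ∀ m, (χ m).natDegree ≤ M₀)
    (hχeval : ∀ l m, (χ l).eval (τ m) = if l = m then 1 else 0)
    (ρ : Fin (M₁ + 1) → Polynomial ℝ)
    (hρdeg : ∀ m, (ρ m).natDegree ≤ M₁)
    (hρeval : ∀ l m, (ρ l).eval (σ m) = if l = m then 1 else 0)
    (Hmat : Matrix (Fin (M₁ + 1)) (Fin (M₀ + 1)) ℝ)
    (hH : ∀ k m, Hmat k m = (χ m).eval (σ k)) :
    ∀ (l : Fin (M₁ + 1)) (m : Fin (M₀ + 1)),
      ∑ k, (∫ x in (0 : ℝ)..1, (ρ l).eval x * (ρ k).eval x) * Hmat k m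
        = ∫ x in (0 : ℝ)..1, (ρ l).eval x * (χ m).eval x := by
  intro l m
  have hlt : ∀ p : Polynomial ℝ, p.natDegree ≤ M₁ →
      p.degree < ((Finset.univ : Finset (Fin (M₁ + 1))).card : WithBot ℕ) := by
    intro p hp
    rw [Finset.card_univ, Fintype.card_fin]
    exact lt_of_le_of_lt (Polynomial.natDegree_le_iff_degree_le.mp hp)
      (by exact_mod_cast Nat.lt_succ_self M₁)
  have key : χ m = ∑ k, Polynomial.C (Hmat k m) * ρ k := by
    refine Polynomial.eq_of_degrees_lt_of_eval_index_eq (v := σ) Finset.univ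
      hσmono.injective.injOn (hlt _ ((hχdeg m).trans hM)) (hlt _ ?_) ?_
    · exact Polynomial.natDegree_sum_le_of_forall_le _ _
        (fun k _ => (Polynomial.natDegree_C_mul_le _ _).trans (hρdeg k))
    · intro i _
      simp [Polynomial.eval_finset_sum, hρeval, hH]
  have hfun : ∀ x : ℝ, (ρ l).eval x * (χ m).eval x
      = ∑ k, ((ρ l).eval x * (ρ k).eval x) * Hmat k m := by
    intro x
    rw [key, Polynomial.eval_finset_sum, Finset.mul_sum]
    refine Finset.sum_congr rfl fun k _ => ?_
    rw [Polynomial.eval_mul, Polynomial.eval_C]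
    ring
  simp_rw [hfun]
  rw [intervalIntegral.integral_finset_sum]
  · simp_rw [intervalIntegral.integral_mul_const]
  · intro k _
    exact (((ρ l).continuous.mul (ρ k).continuous).mul continuous_const).intervalIntegrable _ _
end

section
/- Assume B is invertible and let z ∈ ℂ. Define the sequence of vectors y⁽ᵖ⁾ ∈ ℂ^{M+1} by y⁽⁰⁾ = 𝟙 (the all-ones vector) and y⁽ᵖ⁾ = 𝟙 + z·(B⁻¹Λ)·y⁽ᵖ⁻¹⁾ for p ≥ 1 (the ADER fixed-point iteration applied to Dahlquist's equation u′ = λu with z = λΔt, normalized by u_n). Then the ADER method of order M+1, i.e. M+1 iterations followed by the weighted final update, has the truncated-exponential stability function: 1 + z·Σ_{m=0}^{M} w_m·(y⁽ᴹ⁾)_m = Σ_{r=0}^{M+1} z^r / r!. -/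
lemma ader_interp (M : ℕ) (ξ : Fin (M + 1) → ℝ) (hξ : Function.Injective ξ)
    (ψ : Fin (M + 1) → Polynomial ℝ)
    (hψdeg : ∀ l, (ψ l).natDegree ≤ M)
    (hψeval : ∀ l m, (ψ l).eval (ξ m) = if l = m then 1 else 0) (k : ℕ) (hk : k ≤ M) (x : ℝ) :
    ∑ m, (ψ m).eval x * ξ m ^ k = x ^ k := by
  have h : ∑ m, ψ m * Polynomial.C (ξ m ^ k) = (Polynomial.X : Polynomial ℝ) ^ k := by
    refine Polynomial.eq_of_natDegree_lt_card_of_eval_eq _ _ hξ ?_ ?_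
    · intro i
      simp [Polynomial.eval_finsetSum, hψeval]
    · rw [Fintype.card_fin, Nat.lt_succ_iff]
      refine max_le ?_ ?_
      · refine Polynomial.natDegree_sum_le_of_forall_le _ _ ?_
        intro i _
        exact (Polynomial.natDegree_mul_C_le _ _).trans (hψdeg i)
      · simpa using hk
  have := congrArg (Polynomial.eval x) h
  simpa [Polynomial.eval_finsetSum] using this

lemma ader_parts (p : Polynomial ℝ) (k : ℕ) :
    p.eval 1 - ∫ x in (0 : ℝ)..1, p.derivative.eval x * x ^ (k + 1)
      = (k + 1) * ∫ x in (0 : ℝ)..1, p.eval x * x ^ k := by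
  have h := intervalIntegral.integral_mul_deriv_eq_deriv_mul (a := (0:ℝ)) (b := 1)
    (u := fun x => p.eval x) (v := fun x => x ^ (k + 1)) (u' := fun x => p.derivative.eval x)
    (v' := fun x => ((k + 1 : ℕ) : ℝ) * x ^ k)
    (fun x _ => p.hasDerivAt x) (fun x _ => by simpa using hasDerivAt_pow (k + 1) x)
    ((by fun_prop : Continuous _).intervalIntegrable _ _)
    ((by fun_prop : Continuous _).intervalIntegrable _ _)
  simp only [one_pow, mul_one, ne_eq, Nat.succ_ne_zero, not_false_eq_true, zero_pow, mul_zero,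
    sub_zero] at h
  rw [← h, ← intervalIntegral.integral_const_mul]
  congr 1
  ext x
  push_cast
  ring

/-- The stability function of the ADER method of order M+1 (M+1 iterations of the
fixed-point map on Dahlquist's equation followed by the weighted final update) is the
truncated exponential Σ_{r=0}^{M+1} zʳ/r!. -/
theorem ader_stability_function
    (M : ℕ) (hM : 1 ≤ M)
    (ξ : Fin (M + 1) → ℝ)
    (hξ01 : ∀ m, ξ m ∈ Set.Icc (0 : ℝ) 1)
    (hξmono : StrictMono ξ)
    (ψ : Fin (M + 1) → Polynomial ℝ)
    (hψdeg : ∀ l, (ψ l).natDegree ≤ M)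
    (hψeval : ∀ l m, (ψ l).eval (ξ m) = if l = m then 1 else 0)
    (Bmat Lam : Matrix (Fin (M + 1)) (Fin (M + 1)) ℝ)
    (hB : ∀ l m, Bmat l m = (ψ l).eval 1 * (ψ m).eval 1 -
        ∫ x in (0 : ℝ)..1, (ψ l).derivative.eval x * (ψ m).eval x)
    (hLam : ∀ l m, Lam l m = ∫ x in (0 : ℝ)..1, (ψ l).eval x * (ψ m).eval x)
    (w : Fin (M + 1) → ℝ)
    (hw : ∀ m, w m = ∫ x in (0 : ℝ)..1, (ψ m).eval x)
    (hBinv : IsUnit Bmat.det) (z : ℂ)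
    (y : ℕ → Fin (M + 1) → ℂ)
    (hy0 : y 0 = fun _ => 1)
    (hy : ∀ p l, y (p + 1) l = 1 + z * ∑ m,
      (((Bmat.map Complex.ofReal)⁻¹ * Lam.map Complex.ofReal) l m) * y p m) :
    1 + z * ∑ m, (w m : ℂ) * y M m
      = ∑ r ∈ Finset.range (M + 2), z ^ r / (Nat.factorial r : ℂ) := by
  have hinterp := ader_interp M ξ hξmono.injective ψ hψdeg hψeval
  have hsum : ∀ (q : Polynomial ℝ) k, k ≤ M →
      ∑ m, (∫ x in (0 : ℝ)..1, q.eval x * (ψ m).eval x) * ξ m ^ k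
        = ∫ x in (0 : ℝ)..1, q.eval x * x ^ k := by
    intro q k hk
    simp_rw [← intervalIntegral.integral_mul_const]
    rw [← intervalIntegral.integral_finsetSum]
    · congr 1
      ext x
      rw [← hinterp k hk x, Finset.mul_sum]
      exact Finset.sum_congr rfl fun m _ => by ring
    · intro i _
      exact (by fun_prop : Continuous _).intervalIntegrable _ _
  have hkey : ∀ k, k + 1 ≤ M → ∀ l, ∑ m, Bmat l m * ξ m ^ (k + 1)
      = (k + 1) * ∑ m, Lam l m * ξ m ^ k := by
    intro k hk l
    simp_rw [hB, hLam]
    rw [hsum _ k (by omega), ← ader_parts]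
    simp_rw [sub_mul]
    rw [Finset.sum_sub_distrib, hsum _ (k + 1) hk]
    simp_rw [mul_assoc]
    rw [← Finset.mul_sum, hinterp (k + 1) hk 1]
    simp
  have hwk : ∀ k, k ≤ M → ∑ m, w m * ξ m ^ k = 1 / (k + 1) := by
    intro k hk
    have := hsum 1 k hk
    simp only [Polynomial.eval_one, one_mul] at this
    simp_rw [hw, this, integral_pow]
    simp
  have hdet : IsUnit (Bmat.map Complex.ofReal).det := by
    have h := hBinv.map Complex.ofRealHom
    rw [RingHom.map_det] at h
    exact h
  have hkeyc : ∀ k, k + 1 ≤ M → ∀ l, ∑ m,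
      (((Bmat.map Complex.ofReal)⁻¹ * Lam.map Complex.ofReal) l m) * (ξ m : ℂ) ^ k
        = (ξ l : ℂ) ^ (k + 1) / (k + 1) := by
    intro k hk
    have h1 : (Bmat.map Complex.ofReal).mulVec (fun m => (ξ m : ℂ) ^ (k + 1))
        = ((k : ℂ) + 1) • (Lam.map Complex.ofReal).mulVec (fun m => (ξ m : ℂ) ^ k) := by
      ext l
      simp only [Matrix.mulVec, dotProduct, Matrix.map_apply, Pi.smul_apply, smul_eq_mul]
      exact_mod_cast congrArg Complex.ofReal (hkey k hk l)
    have h2 := congrArg (Matrix.mulVec (Bmat.map Complex.ofReal)⁻¹) h1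
    rw [Matrix.mulVec_mulVec, Matrix.nonsing_inv_mul _ hdet, Matrix.one_mulVec,
      Matrix.mulVec_smul, Matrix.mulVec_mulVec] at h2
    intro l
    have h3 := congrFun h2 l
    simp only [Pi.smul_apply, smul_eq_mul, Matrix.mulVec, dotProduct] at h3
    have h0 : (k : ℂ) + 1 ≠ 0 := Nat.cast_add_one_ne_zero k
    rw [h3]
    field_simp
  have hyp : ∀ p, p ≤ M → ∀ l, y p l
      = ∑ r ∈ Finset.range (p + 1), z ^ r / (Nat.factorial r : ℂ) * (ξ l : ℂ) ^ r := by
    intro p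
    induction p with
    | zero => intro _ l; simp [hy0]
    | succ p ih =>
      intro hp l
      rw [hy, Finset.sum_range_succ' _ (p + 1)]
      simp_rw [ih (by omega), Finset.mul_sum]
      rw [Finset.sum_comm, add_comm]
      congr 1
      · refine Finset.sum_congr rfl fun r hr => ?_
        have hr' := Finset.mem_range.1 hr
        have h := hkeyc r (by omega) l
        have h0 : (r : ℂ) + 1 ≠ 0 := Nat.cast_add_one_ne_zero r
        have h1 : (Nat.factorial r : ℂ) ≠ 0 := by exact_mod_cast Nat.factorial_ne_zero r
        calc _ = z * (z ^ r / (Nat.factorial r : ℂ)) * ∑ m,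
              (((Bmat.map Complex.ofReal)⁻¹ * Lam.map Complex.ofReal) l m) * (ξ m : ℂ) ^ r := by
              rw [Finset.mul_sum]
              exact Finset.sum_congr rfl fun m _ => by ring
          _ = _ := by
              rw [h, Nat.factorial_succ]
              push_cast
              field_simp
              ring
      · simp
  rw [Finset.sum_range_succ' _ (M + 1), add_comm]
  simp_rw [hyp M le_rfl, Finset.mul_sum]
  rw [Finset.sum_comm]
  congr 1
  · refine Finset.sum_congr rfl fun r hr => ?_
    have hr' := Finset.mem_range.1 hr
    have h : ∑ m, (w m : ℂ) * (ξ m : ℂ) ^ r = 1 / (r + 1) := by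
      have h' := congrArg Complex.ofReal (hwk r (by omega))
      push_cast at h'
      exact h'
    have h0 : (r : ℂ) + 1 ≠ 0 := Nat.cast_add_one_ne_zero r
    have h1 : (Nat.factorial r : ℂ) ≠ 0 := by exact_mod_cast Nat.factorial_ne_zero r
    calc _ = z * (z ^ r / (Nat.factorial r : ℂ)) * ∑ m, (w m : ℂ) * (ξ m : ℂ) ^ r := by
          rw [Finset.mul_sum]
          exact Finset.sum_congr rfl fun m _ => by ring
      _ = _ := by
          rw [h, Nat.factorial_succ]
          push_cast
          field_simp
          ring
  · simp
end

section
/- Assume additionally that ξ⁰ = 0 and that B is invertible, and let Λ_W = diag(w₀,…,w_M) be the diagonal matrix of weights (the quadrature-evaluated mass matrix when the quadrature nodes coincide with the subtimenodes, as for Gauss–Lobatto points). Then every entry of the 0-th column of the Runge–Kutta matrix A = B⁻¹Λ_W equals w₀: A_{i0} = w₀ for all i ∈ {0,…,M}. Equivalently, for every ℓ: (Λ_W)_{ℓ0} = w₀·Σ_{m=0}^{M} B_{ℓm}. This is the Lobatto IIIC defining condition a_{i,0} = b₀. -/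
/-- Lobatto IIIC defining condition a_{i,0} = b₀ for the ADER Runge–Kutta matrix
A = B⁻¹·diag(w) when ξ⁰ = 0: every entry of the 0-th column of A equals w₀; equivalently,
(Λ_W)_{ℓ0} = w₀·Σₘ B_{ℓm}. -/
theorem ader_lobatto_IIIC_first_column
    (M : ℕ) (hM : 1 ≤ M)
    (ξ : Fin (M + 1) → ℝ)
    (hξ01 : ∀ m, ξ m ∈ Set.Icc (0 : ℝ) 1)
    (hξmono : StrictMono ξ)
    (ψ : Fin (M + 1) → Polynomial ℝ)
    (hψdeg : ∀ l, (ψ l).natDegree ≤ M)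
    (hψeval : ∀ l m, (ψ l).eval (ξ m) = if l = m then 1 else 0)
    (Bmat Lam : Matrix (Fin (M + 1)) (Fin (M + 1)) ℝ)
    (hB : ∀ l m, Bmat l m = (ψ l).eval 1 * (ψ m).eval 1 -
        ∫ x in (0 : ℝ)..1, (ψ l).derivative.eval x * (ψ m).eval x)
    (hLam : ∀ l m, Lam l m = ∫ x in (0 : ℝ)..1, (ψ l).eval x * (ψ m).eval x)
    (w : Fin (M + 1) → ℝ)
    (hw : ∀ m, w m = ∫ x in (0 : ℝ)..1, (ψ m).eval x)
    (hξ0 : ξ 0 = 0)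
    (hBinv : IsUnit Bmat.det) :
    (∀ i, (Bmat⁻¹ * Matrix.diagonal w) i 0 = w 0) ∧
    (∀ l, Matrix.diagonal w l 0 = w 0 * ∑ m, Bmat l m) := by
  have hsum : ∑ m, ψ m = 1 := by
    apply Polynomial.eq_of_natDegree_lt_card_of_eval_eq _ _ hξmono.injective
    · intro m
      simp [Polynomial.eval_finsetSum, hψeval]
    · have h1 : (∑ m, ψ m).natDegree ≤ M :=
        Polynomial.natDegree_sum_le_of_forall_le _ _ (fun l _ => hψdeg l)
      simp only [Polynomial.natDegree_one, Fintype.card_fin]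
      omega
  have hsumeval : ∀ x : ℝ, ∑ m, (ψ m).eval x = 1 := by
    intro x
    rw [← Polynomial.eval_finsetSum, hsum, Polynomial.eval_one]
  have hrow : ∀ l, ∑ m, Bmat l m = if l = 0 then 1 else 0 := by
    intro l
    simp only [hB]
    rw [Finset.sum_sub_distrib, ← Finset.mul_sum, hsumeval,
      ← intervalIntegral.integral_finsetSum]
    · simp only [← Finset.mul_sum, hsumeval, mul_one]
      rw [intervalIntegral.integral_eq_sub_of_hasDerivAt
        (fun x _ => (ψ l).hasDerivAt x)
        ((ψ l).derivative.continuous.intervalIntegrable _ _)]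
      have h0 := hψeval l 0
      rw [hξ0] at h0
      rw [h0]
      ring
    · intro m _
      exact ((ψ l).derivative.continuous.mul (ψ m).continuous).intervalIntegrable _ _
  have h2 : ∀ l, Matrix.diagonal w l 0 = w 0 * ∑ m, Bmat l m := by
    intro l
    rw [hrow l, Matrix.diagonal_apply]
    split_ifs with h
    · rw [h, mul_one]
    · rw [mul_zero]
  refine ⟨fun i => ?_, h2⟩
  have hcol : (fun l => Matrix.diagonal w l 0) = Bmat.mulVec (fun _ => w 0) := by
    funext l
    rw [h2 l, Matrix.mulVec, dotProduct, Finset.mul_sum]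
    exact Finset.sum_congr rfl (fun m _ => mul_comm _ _)
  have h3 : (Bmat⁻¹ * Matrix.diagonal w) i 0
      = (Bmat⁻¹.mulVec (fun l => Matrix.diagonal w l 0)) i := rfl
  rw [h3, hcol, Matrix.mulVec_mulVec, Matrix.nonsing_inv_mul _ hBinv, Matrix.one_mulVec]
end

section
/- Assume additionally that ξ⁰ = 0 and ξᴹ = 1, that the interpolatory quadrature at the nodes is exact to degree 2M−1 (Σ_{m} w_m p(ξᵐ) = ∫₀¹ p for every polynomial p of degree ≤ 2M−1, i.e. the nodes are the Gauss–Lobatto points), and that B is invertible. If A′ is any real (M+1)×(M+1) matrix satisfying the Lobatto IIIC conditions A′_{i,0} = w₀ for all i, and Σ_{j=0}^{M} A′_{ij}·(ξʲ)^{z−1} = (ξⁱ)^z / z for all i and all z with 1 ≤ z ≤ M, then A′ = B⁻¹·diag(w₀,…,w_M). In other words, the Runge–Kutta matrix of the ADER method with Gauss–Lobatto subtimenodes and nodal quadrature is the unique matrix satisfying the Lobatto IIIC characterization, so the ADER-RK Gauss–Lobatto method coincides with the Lobatto IIIC method. -/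
/-- Uniqueness of the Lobatto IIIC matrix: with Gauss–Lobatto-type nodes (ξ⁰ = 0, ξᴹ = 1,
nodal quadrature exact to degree 2M−1), any matrix A' satisfying a_{i,0} = b₀ and the
simplifying condition C(M) equals the ADER Runge–Kutta matrix B⁻¹·diag(w). -/
theorem ader_RK_GLB_is_lobatto_IIIC
    (M : ℕ) (hM : 1 ≤ M)
    (ξ : Fin (M + 1) → ℝ)
    (hξ01 : ∀ m, ξ m ∈ Set.Icc (0 : ℝ) 1)
    (hξmono : StrictMono ξ)
    (ψ : Fin (M + 1) → Polynomial ℝ)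
    (hψdeg : ∀ l, (ψ l).natDegree ≤ M)
    (hψeval : ∀ l m, (ψ l).eval (ξ m) = if l = m then 1 else 0)
    (Bmat Lam : Matrix (Fin (M + 1)) (Fin (M + 1)) ℝ)
    (hB : ∀ l m, Bmat l m = (ψ l).eval 1 * (ψ m).eval 1 -
        ∫ x in (0 : ℝ)..1, (ψ l).derivative.eval x * (ψ m).eval x)
    (hLam : ∀ l m, Lam l m = ∫ x in (0 : ℝ)..1, (ψ l).eval x * (ψ m).eval x)
    (w : Fin (M + 1) → ℝ)
    (hw : ∀ m, w m = ∫ x in (0 : ℝ)..1, (ψ m).eval x)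
    (hξ0 : ξ 0 = 0) (hξM : ξ (Fin.last M) = 1)
    (hquad : ∀ p : Polynomial ℝ, p.natDegree ≤ 2 * M - 1 →
      ∑ m, w m * p.eval (ξ m) = ∫ x in (0 : ℝ)..1, p.eval x)
    (hBinv : IsUnit Bmat.det)
    (A' : Matrix (Fin (M + 1)) (Fin (M + 1)) ℝ)
    (hA'0 : ∀ i, A' i 0 = w 0)
    (hA'C : ∀ (i : Fin (M + 1)) (z : ℕ), 1 ≤ z → z ≤ M →
      ∑ j, A' i j * ξ j ^ (z - 1) = ξ i ^ z / (z : ℝ)) :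
    A' = Bmat⁻¹ * Matrix.diagonal w := by
  have hinj : Function.Injective ξ := hξmono.injective
  have hint : ∀ p : Polynomial ℝ, IntervalIntegrable (fun x => p.eval x) MeasureTheory.volume 0 1 :=
    fun p => p.continuous.intervalIntegrable _ _
  -- interpolation
  have hinterp : ∀ q : Polynomial ℝ, q.natDegree ≤ M →
      ∑ m, Polynomial.C (q.eval (ξ m)) * ψ m = q := by
    intro q hq
    refine Polynomial.eq_of_natDegree_lt_card_of_eval_eq _ _ hinj ?_ ?_
    · intro i
      simp [Polynomial.eval_finsetSum, hψeval]
    · rw [Fintype.card_fin, max_lt_iff]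
      refine ⟨Nat.lt_succ_of_le ?_, Nat.lt_succ_of_le hq⟩
      refine Polynomial.natDegree_sum_le_of_forall_le _ _ ?_
      intro m _
      exact (Polynomial.natDegree_C_mul_le _ _).trans (hψdeg m)
  have hψ0 : ∀ l, (ψ l).eval 0 = if l = 0 then 1 else 0 := by
    intro l
    have h := hψeval l 0
    rwa [hξ0] at h
  have key : ∀ q : Polynomial ℝ, q.natDegree ≤ M → ∀ l,
      ∑ m, Bmat l m * q.eval (ξ m) =
        (if l = 0 then q.eval 0 else 0) + w l * q.derivative.eval (ξ l) := by
    intro q hq l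
    have h1 : ∑ m, Bmat l m * q.eval (ξ m) = (ψ l).eval 1 * q.eval 1
        - ∫ x in (0 : ℝ)..1, ((ψ l).derivative * q).eval x := by
      have e1 : ∀ x, q.eval x = ∑ m, q.eval (ξ m) * (ψ m).eval x := by
        intro x
        conv_lhs => rw [← hinterp q hq]
        simp [Polynomial.eval_finsetSum]
      have e2 : ∫ x in (0 : ℝ)..1, ((ψ l).derivative * q).eval x
          = ∑ m, q.eval (ξ m) * ∫ x in (0 : ℝ)..1, (ψ l).derivative.eval x * (ψ m).eval x := by
        simp_rw [← intervalIntegral.integral_const_mul]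
        rw [← intervalIntegral.integral_finsetSum]
        · refine intervalIntegral.integral_congr fun x _ => ?_
          simp only [Polynomial.eval_mul]
          rw [e1 x, Finset.mul_sum]
          exact Finset.sum_congr rfl fun m _ => by ring
        · intro m _
          exact Continuous.intervalIntegrable (by fun_prop) _ _
      rw [e2, e1 1, Finset.mul_sum, ← Finset.sum_sub_distrib]
      refine Finset.sum_congr rfl fun m _ => ?_
      rw [hB]
      ring
    have h2 : ∫ x in (0 : ℝ)..1, ((ψ l).derivative * q + ψ l * q.derivative).eval x
        = (ψ l * q).eval 1 - (ψ l * q).eval 0 := by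
      rw [← Polynomial.derivative_mul]
      exact intervalIntegral.integral_eq_sub_of_hasDerivAt
        (fun x _ => (ψ l * q).hasDerivAt x) (hint _)
    have h3 : ∑ m, w m * (ψ l * q.derivative).eval (ξ m)
        = ∫ x in (0 : ℝ)..1, (ψ l * q.derivative).eval x := by
      apply hquad
      have a := Polynomial.natDegree_mul_le (p := ψ l) (q := q.derivative)
      have b := Polynomial.natDegree_derivative_le q
      have c := hψdeg l
      omega
    have h4 : ∑ m, w m * (ψ l * q.derivative).eval (ξ m) = w l * q.derivative.eval (ξ l) := by
      simp [hψeval]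
    simp only [Polynomial.eval_add] at h2
    rw [intervalIntegral.integral_add (hint _) (hint _), ← h3, h4] at h2
    rw [h1]
    have h5 : (ψ l * q).eval 0 = if l = 0 then q.eval 0 else 0 := by
      rw [Polynomial.eval_mul, hψ0]
      split_ifs <;> simp
    rw [h5, Polynomial.eval_mul] at h2
    linarith
  have main : Bmat * A' = Matrix.diagonal w := by
    ext l j
    -- column 0
    have c0 : (Bmat * A') l 0 = Matrix.diagonal w l 0 := by
      have := key 1 (by simp) l
      simp only [Polynomial.eval_one, mul_one, Polynomial.derivative_one, Polynomial.eval_zero,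
        mul_zero, add_zero] at this
      rw [Matrix.mul_apply]
      simp_rw [hA'0]
      rw [← Finset.sum_mul, this, Matrix.diagonal_apply]
      split_ifs with h
      · rw [h, one_mul]
      · simp
    have cz : ∀ k : ℕ, k < M →
        ∑ j, ((Bmat * A') l j - Matrix.diagonal w l j) * ξ j ^ k = 0 := by
      intro k hk
      have hk1 : ((k : ℝ) + 1) ≠ 0 := by positivity
      have h := key (Polynomial.C (1 / ((k : ℝ) + 1)) * Polynomial.X ^ (k + 1))
        ((Polynomial.natDegree_C_mul_X_pow_le _ _).trans hk) l
      have hr : w l * ((Polynomial.C (1 / ((k : ℝ) + 1)) * Polynomial.X ^ (k + 1)).derivative.eval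
          (ξ l)) = w l * ξ l ^ k := by
        rw [Polynomial.derivative_C_mul_X_pow]
        simp [hk1]
      rw [hr] at h
      have hs : ∑ j, (Bmat * A') l j * ξ j ^ k = w l * ξ l ^ k := by
        simp_rw [Matrix.mul_apply, Finset.sum_mul]
        rw [Finset.sum_comm]
        have : ∀ m, ∑ j, Bmat l m * A' m j * ξ j ^ k = Bmat l m *
            (Polynomial.C (1 / ((k : ℝ) + 1)) * Polynomial.X ^ (k + 1)).eval (ξ m) := by
          intro m
          have := hA'C m (k + 1) (by omega) hk
          simp only [Nat.add_sub_cancel] at this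
          simp_rw [mul_assoc]
          rw [← Finset.mul_sum, this]
          simp only [Polynomial.eval_mul, Polynomial.eval_C, Polynomial.eval_pow,
            Polynomial.eval_X]
          push_cast
          ring
        simp_rw [this]
        rw [h]
        simp
      simp_rw [sub_mul]
      rw [Finset.sum_sub_distrib, hs]
      simp [Matrix.diagonal_apply]
    have hv : (fun i : Fin M => (Bmat * A') l i.succ - Matrix.diagonal w l i.succ) = 0 := by
      refine Matrix.eq_zero_of_forall_pow_sum_mul_pow_eq_zero (f := fun i : Fin M => ξ i.succ)
        (hinj.comp (Fin.succ_injective M)) ?_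
      intro i
      have := cz i i.2
      rw [Fin.sum_univ_succ, c0, sub_self, zero_mul, zero_add] at this
      exact this
    refine Fin.cases c0 (fun i => ?_) j
    exact sub_eq_zero.mp (congrFun hv i)
  rw [← main, Matrix.nonsing_inv_mul_cancel_left _ _ hBinv]
end

section
/- Assume B is invertible, let G : ℝ × ℝ^Q → ℝ^Q satisfy ‖G(t,u) − G(t,v)‖_∞ ≤ C‖u − v‖_∞ for all t, u, v, fix t_n ∈ ℝ, u_n ∈ ℝ^Q and Δt > 0, set tᵐ = t_n + Δt·ξᵐ, and define the ADER-DeC operators L¹, L² : (ℝ^Q)^{M+1} → (ℝ^Q)^{M+1} by L¹(u)_ℓ = u_ℓ − u_n − Δt Σ_m (B⁻¹Λ)_{ℓm} G(tᵐ, u_n) and L²(u)_ℓ = u_ℓ − u_n − Δt Σ_m (B⁻¹Λ)_{ℓm} G(tᵐ, uᵐ). Equip (ℝ^Q)^{M+1} with ‖u‖_∞ = max_m ‖uᵐ‖_∞. Then L¹ and L² satisfy the DeC hypotheses with α₁ = 1 and α₂ = ‖B⁻¹Λ‖_∞·C: namely ‖L¹(v) − L¹(w)‖_∞ = ‖v −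 w‖_∞ for all v, w, and ‖(L¹(v) − L²(v)) − (L¹(w) − L²(w))‖_∞ ≤ Δt·‖B⁻¹Λ‖_∞·C·‖v − w‖_∞ for all v, w, where ‖A‖_∞ denotes the maximum absolute row sum of a matrix. -/
/-- The ADER-DeC operators L¹ and L² satisfy the DeC hypotheses with α₁ = 1 and
α₂ = ‖B⁻¹Λ‖_∞·C: L¹ is an isometry-like operator and L¹ − L² is Lipschitz with constant
Δt·‖B⁻¹Λ‖_∞·C, in the sup norm. -/
theorem ader_dec_operators_properties
    (M : ℕ) (hM : 1 ≤ M)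
    (ξ : Fin (M + 1) → ℝ)
    (hξ01 : ∀ m, ξ m ∈ Set.Icc (0 : ℝ) 1)
    (hξmono : StrictMono ξ)
    (ψ : Fin (M + 1) → Polynomial ℝ)
    (hψdeg : ∀ l, (ψ l).natDegree ≤ M)
    (hψeval : ∀ l m, (ψ l).eval (ξ m) = if l = m then 1 else 0)
    (Bmat Lam : Matrix (Fin (M + 1)) (Fin (M + 1)) ℝ)
    (hB : ∀ l m, Bmat l m = (ψ l).eval 1 * (ψ m).eval 1 -
        ∫ x in (0 : ℝ)..1, (ψ l).derivative.eval x * (ψ m).eval x)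
    (hLam : ∀ l m, Lam l m = ∫ x in (0 : ℝ)..1, (ψ l).eval x * (ψ m).eval x)
    (w : Fin (M + 1) → ℝ)
    (hw : ∀ m, w m = ∫ x in (0 : ℝ)..1, (ψ m).eval x)
    (hBinv : IsUnit Bmat.det)
    (Q : ℕ) (G : ℝ → (Fin Q → ℝ) → (Fin Q → ℝ)) (C : ℝ) (hC : 0 ≤ C)
    (hG : ∀ (t : ℝ) (u v : Fin Q → ℝ), ‖G t u - G t v‖ ≤ C * ‖u - v‖)
    (tn : ℝ) (un : Fin Q → ℝ) (Δt : ℝ) (hΔt : 0 < Δt)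
    (L1 L2 : (Fin (M + 1) → Fin Q → ℝ) → (Fin (M + 1) → Fin Q → ℝ))
    (hL1 : ∀ u l, L1 u l = u l - un -
      Δt • ∑ m, ((Bmat⁻¹ * Lam) l m) • G (tn + Δt * ξ m) un)
    (hL2 : ∀ u l, L2 u l = u l - un -
      Δt • ∑ m, ((Bmat⁻¹ * Lam) l m) • G (tn + Δt * ξ m) (u m)) :
    (∀ v v' : Fin (M + 1) → Fin Q → ℝ, ‖L1 v - L1 v'‖ = ‖v - v'‖) ∧
    (∀ v v' : Fin (M + 1) → Fin Q → ℝ,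
      ‖(L1 v - L2 v) - (L1 v' - L2 v')‖
        ≤ Δt * (⨆ l, ∑ m, |(Bmat⁻¹ * Lam) l m|) * C * ‖v - v'‖) := by
  constructor
  · intro v v'
    congr 1
    funext l
    simp only [Pi.sub_apply, hL1]
    abel
  · intro v v'
    generalize Bmat⁻¹ * Lam = A at *
    have hrow : ∀ l, ∑ m, |A l m| ≤ ⨆ l, ∑ m, |A l m| := fun l =>
      le_ciSup (f := fun l => ∑ m, |A l m|) (Set.finite_range _).bddAbove l
    have hS : 0 ≤ ⨆ l, ∑ m, |A l m| :=
      le_trans (Finset.sum_nonneg fun m _ => abs_nonneg _) (hrow 0)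
    refine (pi_norm_le_iff_of_nonneg (by positivity)).2 fun l => ?_
    have key : ((L1 v - L2 v) - (L1 v' - L2 v')) l
        = Δt • ∑ m, A l m • (G (tn + Δt * ξ m) (v m) - G (tn + Δt * ξ m) (v' m)) := by
      simp only [Pi.sub_apply, hL1, hL2, smul_sub, Finset.sum_sub_distrib]
      abel
    rw [key, norm_smul, Real.norm_of_nonneg hΔt.le, mul_assoc, mul_assoc]
    refine mul_le_mul_of_nonneg_left ?_ hΔt.le
    calc ‖∑ m, A l m • (G (tn + Δt * ξ m) (v m) - G (tn + Δt * ξ m) (v' m))‖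
        ≤ ∑ m, |A l m| * (C * ‖v - v'‖) := by
          refine norm_sum_le_of_le _ fun m _ => ?_
          rw [norm_smul, Real.norm_eq_abs]
          refine mul_le_mul_of_nonneg_left ((hG _ _ _).trans ?_) (abs_nonneg _)
          exact mul_le_mul_of_nonneg_left (norm_le_pi_norm (v - v') m) hC
      _ = (∑ m, |A l m|) * (C * ‖v - v'‖) := by rw [Finset.sum_mul]
      _ ≤ _ := mul_le_mul_of_nonneg_right (hrow l) (by positivity)
end
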